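/- arXiv:1503.08529 — 2 statements merged into one kernel-verified Lean document; each statement's English description precedes it below -/
import Mathlib

section
/- There exists a constant C>0 such that, for all r≥1 and all b>0, g(b) ≤ e_D(b,r)/r² ≤ g(b) + C √b / r. (For b∈(0,1) this is the estimate of Fournais–Kachmar; for b≥1 it holds trivially since g(b)=0 and e_D(b,r)=0.) -/
open MeasureTheory Real Set Filter Topology

noncomputable section

/-- The open square `Q_r = (-r/2, r/2) × (-r/2, r/2)`. -/
def Qsq (r : ℝ) : Set (ℝ × ℝ) := Ioo (-r/2) (r/2) ×ˢ Ioo (-r/2) (r/2)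

/-- The vertical strip `S_R = (-R/2, R/2) × ℝ`. -/
def Strip (R : ℝ) : Set (ℝ × ℝ) := Ioo (-R/2) (R/2) ×ˢ (univ : Set ℝ)

/-- The magnetic potential `A₀(x) = (-x₂/2, x₁/2)` of the constant unit magnetic field. -/
def A₀ (x : ℝ × ℝ) : ℝ × ℝ := (-x.2 / 2, x.1 / 2)

/-- The magnetic potential `A_van(x) = (-x₂²/2, 0)` generating the field `B(x) = x₂`. -/
def Avan (x : ℝ × ℝ) : ℝ × ℝ := (-x.2 ^ 2 / 2, 0)

/-- The magnetic gradient energy density `|(∇ - iA)u|²` at `x`. -/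
def magGradSq (A : ℝ × ℝ → ℝ × ℝ) (u : ℝ × ℝ → ℂ) (x : ℝ × ℝ) : ℝ :=
  ‖fderiv ℝ u x (1, 0) - Complex.I * ((A x).1 : ℂ) * u x‖ ^ 2 +
  ‖fderiv ℝ u x (0, 1) - Complex.I * ((A x).2 : ℂ) * u x‖ ^ 2

/-- The Ginzburg–Landau functional `F_{b,Q_r}` on the square `Q_r`. -/
def Fsq (b r : ℝ) (u : ℝ × ℝ → ℂ) : ℝ :=
  ∫ x in Qsq r, (b * magGradSq A₀ u x - ‖u x‖ ^ 2 + ‖u x‖ ^ 4 / 2)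

/-- (Smooth surrogate of) membership in `H¹(Q_r; ℂ)`. -/
def MemH1sq (u : ℝ × ℝ → ℂ) : Prop := ContDiff ℝ 1 u

/-- (Smooth surrogate of) membership in `H¹₀(Q_r; ℂ)`: vanishing on the boundary. -/
def MemH10sq (r : ℝ) (u : ℝ × ℝ → ℂ) : Prop :=
  ContDiff ℝ 1 u ∧ ∀ x ∈ frontier (Qsq r), u x = 0

/-- The Dirichlet ground-state energy `e_D(b, r)`. -/
def eD (b r : ℝ) : ℝ := sInf (Fsq b r '' {u | MemH10sq r u})

/-- The Neumann ground-state energy `e_N(b, r)`. -/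
def eN (b r : ℝ) : ℝ := sInf (Fsq b r '' {u | MemH1sq u})

/-- The energy density of the strip functional `𝓔_{L,R}` at `x`. -/
def stripDensity (L : ℝ) (u : ℝ × ℝ → ℂ) (x : ℝ × ℝ) : ℝ :=
  magGradSq Avan u x - L ^ (-(2:ℝ)/3) * ‖u x‖ ^ 2 + (L ^ (-(2:ℝ)/3) / 2) * ‖u x‖ ^ 4

/-- The strip functional `𝓔_{L,R}`. -/
def Estrip (L R : ℝ) (u : ℝ × ℝ → ℂ) : ℝ := ∫ x in Strip R, stripDensity L u x

/-- (Surrogate of) membership in the space `H¹_{mag,0}(S_R)`. -/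
def MemH1mag0 (R : ℝ) (u : ℝ × ℝ → ℂ) : Prop :=
  ContDiff ℝ 1 u ∧
  IntegrableOn (fun x => ‖u x‖ ^ 2) (Strip R) ∧
  IntegrableOn (magGradSq Avan u) (Strip R) ∧
  IntegrableOn (fun x => ‖u x‖ ^ 4) (Strip R) ∧
  ∀ x ∈ frontier (Strip R), u x = 0

/-- The ground-state energy `e_gs(L; R)` of the strip functional. -/
def egs (L R : ℝ) : ℝ := sInf (Estrip L R '' {u | MemH1mag0 R u})

/-- `g : (0,∞) → ℝ` is the thermodynamic limit of the Dirichlet square energies. -/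
def IsLimitG (g : ℝ → ℝ) : Prop :=
  ∀ b > 0, Tendsto (fun r => eD b r / r ^ 2) atTop (nhds (g b))

/-- `E : (0,∞) → ℝ` is the large-`R` limit of the strip energies. -/
def IsLimitE (E : ℝ → ℝ) : Prop :=
  ∀ L > 0, Tendsto (fun R => egs L R / R) atTop (nhds (E L))

/-- First component of the magnetic gradient. -/
def D1 (u : ℝ × ℝ → ℂ) (x : ℝ × ℝ) : ℂ :=
  fderiv ℝ u x (1, 0) - Complex.I * ((A₀ x).1 : ℂ) * u x

/-- Second component of the magnetic gradient. -/
def D2 (u : ℝ × ℝ → ℂ) (x : ℝ × ℝ) : ℂ :=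
  fderiv ℝ u x (0, 1) - Complex.I * ((A₀ x).2 : ℂ) * u x

/-- The energy density. -/
def dens (b : ℝ) (u : ℝ × ℝ → ℂ) (x : ℝ × ℝ) : ℝ :=
  b * (‖D1 u x‖ ^ 2 + ‖D2 u x‖ ^ 2) - ‖u x‖ ^ 2 + ‖u x‖ ^ 4 / 2

lemma Fsq_eq (b r : ℝ) (u : ℝ × ℝ → ℂ) : Fsq b r u = ∫ x in Qsq r, dens b u x := rfl

lemma cont_fderiv_apply {u : ℝ × ℝ → ℂ} (hu : ContDiff ℝ 1 u) (e : ℝ × ℝ) :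
    Continuous (fun x => fderiv ℝ u x e) :=
  (hu.continuous_fderiv one_ne_zero).clm_apply continuous_const

lemma cont_A1 : Continuous (fun x : ℝ × ℝ => ((A₀ x).1 : ℂ)) := by
  unfold A₀; fun_prop

lemma cont_A2 : Continuous (fun x : ℝ × ℝ => ((A₀ x).2 : ℂ)) := by
  unfold A₀; fun_prop

lemma cont_D1 {u : ℝ × ℝ → ℂ} (hu : ContDiff ℝ 1 u) : Continuous (D1 u) := by
  unfold D1
  exact (cont_fderiv_apply hu _).sub ((continuous_const.mul cont_A1).mul hu.continuous)

lemma cont_D2 {u : ℝ × ℝ → ℂ} (hu : ContDiff ℝ 1 u) : Continuous (D2 u) := by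
  unfold D2
  exact (cont_fderiv_apply hu _).sub ((continuous_const.mul cont_A2).mul hu.continuous)

lemma cont_dens (b : ℝ) {u : ℝ × ℝ → ℂ} (hu : ContDiff ℝ 1 u) : Continuous (dens b u) := by
  have h1 := cont_D1 hu
  have h2 := cont_D2 hu
  have h3 := hu.continuous
  unfold dens
  fun_prop

/-- closed square -/
def Ksq (r : ℝ) : Set (ℝ × ℝ) := Icc (-r/2) (r/2) ×ˢ Icc (-r/2) (r/2)

lemma Ksq_compact (r : ℝ) : IsCompact (Ksq r) := isCompact_Icc.prod isCompact_Icc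

lemma Qsq_sub (r : ℝ) : Qsq r ⊆ Ksq r := prod_mono Ioo_subset_Icc_self Ioo_subset_Icc_self

lemma Qsq_open (r : ℝ) : IsOpen (Qsq r) := isOpen_Ioo.prod isOpen_Ioo

lemma Qsq_meas (r : ℝ) : MeasurableSet (Qsq r) := (Qsq_open r).measurableSet

lemma closure_Qsq {r : ℝ} (hr : 0 < r) : closure (Qsq r) = Ksq r := by
  have : (-r/2) ≠ r/2 := by linarith
  rw [Qsq, closure_prod_eq, closure_Ioo this, Ksq]

lemma int_Q {f : ℝ × ℝ → ℝ} (r : ℝ) (hf : Continuous f) : IntegrableOn f (Qsq r) :=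
  (hf.continuousOn.integrableOn_compact (Ksq_compact r)).mono_set (Qsq_sub r)

lemma vol_Q {r : ℝ} (hr : 0 ≤ r) : volume.real (Qsq r) = r ^ 2 := by
  rw [Qsq, Measure.volume_eq_prod, measureReal_prod_prod, Real.volume_real_Ioo_of_le (by linarith)]
  ring

lemma vol_Q_lt (r : ℝ) : volume (Qsq r) < ⊤ :=
  (measure_mono (Qsq_sub r)).trans_lt (Ksq_compact r).measure_lt_top

lemma dens_lower {b : ℝ} (hb : 0 < b) (u : ℝ × ℝ → ℂ) (x : ℝ × ℝ) : -(1/2) ≤ dens b u x := by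
  unfold dens
  have : 0 ≤ b * (‖D1 u x‖ ^ 2 + ‖D2 u x‖ ^ 2) := by positivity
  nlinarith [sq_nonneg (‖u x‖ ^ 2 - 1)]

lemma Fsq_lower {b r : ℝ} (hb : 0 < b) (hr : 0 ≤ r) {u : ℝ × ℝ → ℂ} (hu : ContDiff ℝ 1 u) :
    -(r ^ 2 / 2) ≤ Fsq b r u := by
  rw [Fsq_eq]
  have h := setIntegral_mono (μ := volume) (s := Qsq r) (f := fun _ => -(1/2 : ℝ))
    (integrableOn_const (vol_Q_lt r).ne) (int_Q r (cont_dens b hu)) (dens_lower hb u)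
  rw [setIntegral_const, vol_Q hr] at h
  simp only [smul_eq_mul] at h
  linarith

lemma eD_bdd {b r : ℝ} (hb : 0 < b) (hr : 0 ≤ r) : BddBelow (Fsq b r '' {u | MemH10sq r u}) := by
  refine ⟨-(r^2/2), ?_⟩
  rintro _ ⟨u, hu, rfl⟩
  exact Fsq_lower hb hr hu.1

lemma eD_le {b r : ℝ} (hb : 0 < b) (hr : 0 ≤ r) {u : ℝ × ℝ → ℂ} (hu : MemH10sq r u) :
    eD b r ≤ Fsq b r u := csInf_le (eD_bdd hb hr) ⟨u, hu, rfl⟩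

lemma mem_zero (r : ℝ) : MemH10sq r (fun _ => 0) := ⟨contDiff_const, fun _ _ => rfl⟩

lemma eD_nonpos {b r : ℝ} (hb : 0 < b) (hr : 0 ≤ r) : eD b r ≤ 0 := by
  refine (eD_le hb hr (mem_zero r)).trans (le_of_eq ?_)
  rw [Fsq_eq]
  simp [dens, D1, D2]

lemma eD_lower {b r : ℝ} (hb : 0 < b) (hr : 0 ≤ r) : -(r ^ 2 / 2) ≤ eD b r := by
  refine le_csInf ⟨_, _, mem_zero r, rfl⟩ ?_
  rintro _ ⟨u, hu, rfl⟩
  exact Fsq_lower hb hr hu.1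

/-- `C¹` functions supported inside the open square. -/
def Cc (r : ℝ) (u : ℝ × ℝ → ℂ) : Prop := ContDiff ℝ 1 u ∧ tsupport u ⊆ Qsq r

lemma Cc.compact {r : ℝ} {u : ℝ × ℝ → ℂ} (h : Cc r u) : HasCompactSupport u :=
  (Ksq_compact r).of_isClosed_subset (isClosed_tsupport u) (h.2.trans (Qsq_sub r))

lemma Cc.mem {r : ℝ} {u : ℝ × ℝ → ℂ} (h : Cc r u) : MemH10sq r u := by
  refine ⟨h.1, fun x hx => ?_⟩
  by_contra hne
  have h1 := h.2 (subset_tsupport u hne)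
  rw [(Qsq_open r).frontier_eq] at hx
  exact hx.2 h1

lemma D1_zero {u : ℝ × ℝ → ℂ} {x : ℝ × ℝ} (hx : x ∉ tsupport u) : D1 u x = 0 := by
  have h1 : u x = 0 := image_eq_zero_of_notMem_tsupport hx
  have h2 : fderiv ℝ u x = 0 := by
    by_contra h; exact hx (support_fderiv_subset ℝ h)
  simp [D1, h1, h2]

lemma D2_zero {u : ℝ × ℝ → ℂ} {x : ℝ × ℝ} (hx : x ∉ tsupport u) : D2 u x = 0 := by
  have h1 : u x = 0 := image_eq_zero_of_notMem_tsupport hx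
  have h2 : fderiv ℝ u x = 0 := by
    by_contra h; exact hx (support_fderiv_subset ℝ h)
  simp [D2, h1, h2]

lemma dens_zero {b : ℝ} {u : ℝ × ℝ → ℂ} {x : ℝ × ℝ} (hx : x ∉ tsupport u) : dens b u x = 0 := by
  have h1 : u x = 0 := image_eq_zero_of_notMem_tsupport hx
  simp [dens, D1_zero hx, D2_zero hx, h1]

lemma Cc.Fsq_full {b r : ℝ} {u : ℝ × ℝ → ℂ} (h : Cc r u) : Fsq b r u = ∫ x, dens b u x := by
  rw [Fsq_eq]
  refine setIntegral_eq_integral_of_forall_compl_eq_zero fun x hx => ?_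
  exact dens_zero fun h' => hx (h.2 h')

lemma Cc.int_dens {b r : ℝ} {u : ℝ × ℝ → ℂ} (h : Cc r u) : Integrable (dens b u) := by
  refine (cont_dens b h.1).integrable_of_hasCompactSupport ?_
  exact HasCompactSupport.intro h.compact fun x hx => dens_zero hx

/-- A `C¹` map of the plane vanishing near `0` and equal to the identity far away. -/
lemma exists_trunc : ∃ φ : ℂ → ℂ, ContDiff ℝ 1 φ ∧ (∀ z, ‖φ z‖ ≤ ‖z‖) ∧
    (∀ z, ‖z‖ < 1 → φ z = 0) ∧ (∀ z, 2 < ‖z‖ → φ z = z ∧ fderiv ℝ φ z = ContinuousLinearMap.id ℝ ℂ) ∧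
    fderiv ℝ φ 0 = 0 ∧ ∃ K : ℝ, ∀ z, ‖fderiv ℝ φ z‖ ≤ K := by
  let f : ContDiffBump (0 : ℂ) := ⟨1, 2, one_pos, one_lt_two⟩
  have hfc : ContDiff ℝ 1 (f : ℂ → ℝ) := f.contDiff
  have hψ : ContDiff ℝ 1 (fun z : ℂ => f z • z) := hfc.smul contDiff_id
  have hψs : HasCompactSupport (fun z : ℂ => f z • z) := f.hasCompactSupport.smul_right
  have hφ : ContDiff ℝ 1 (fun z : ℂ => z - f z • z) := contDiff_id.sub hψ
  have hin : ∀ z : ℂ, ‖z‖ < 1 → z - f z • z = 0 := by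
    intro z hz
    have : f z = 1 := f.one_of_mem_closedBall (by simpa [f] using hz.le)
    simp [this]
  have hout : ∀ z : ℂ, 2 < ‖z‖ → z - f z • z = z := by
    intro z hz
    have : f z = 0 := f.zero_of_le_dist (by simpa [f] using hz.le)
    simp [this]
  have hder : ∀ z : ℂ, fderiv ℝ (fun z : ℂ => z - f z • z) z =
      ContinuousLinearMap.id ℝ ℂ - fderiv ℝ (fun z : ℂ => f z • z) z := by
    intro z
    have h := ((hasFDerivAt_id z).sub (hψ.differentiable one_ne_zero z).hasFDerivAt).fderiv
    exact h
  refine ⟨fun z => z - f z • z, hφ, ?_, hin, ?_, ?_, ?_⟩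
  · intro z
    have h0 := f.nonneg (x := z)
    have h1 := f.le_one (x := z)
    have : z - f z • z = (1 - f z) • z := by rw [sub_smul, one_smul]
    simp only [this, norm_smul, Real.norm_eq_abs, abs_of_nonneg (sub_nonneg.2 h1)]
    nlinarith [norm_nonneg z]
  · intro z hz
    refine ⟨hout z hz, ?_⟩
    have : (fun z : ℂ => z - f z • z) =ᶠ[𝓝 z] fun z => z := by
      filter_upwards [(isOpen_lt continuous_const continuous_norm).mem_nhds hz] with y hy
      exact hout y hy
    rw [this.fderiv_eq]; simp
  · have : (fun z : ℂ => z - f z • z) =ᶠ[𝓝 0] fun z => 0 := by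
      filter_upwards [(isOpen_lt continuous_norm continuous_const).mem_nhds
        (show ‖(0:ℂ)‖ < 1 by simp)] with y hy
      exact hin y hy
    rw [this.fderiv_eq]; simp
  · obtain ⟨K, hK⟩ := (hψs.fderiv (𝕜 := ℝ)).exists_bound_of_continuous
      (hψ.continuous_fderiv one_ne_zero)
    refine ⟨1 + K, fun z => ?_⟩
    rw [hder]
    refine (norm_sub_le _ _).trans (add_le_add ContinuousLinearMap.norm_id_le (hK z))

lemma trunc_Cc {r : ℝ} (hr : 0 < r) {u : ℝ × ℝ → ℂ} (hu : MemH10sq r u) {ψ : ℂ → ℂ}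
    (hψ : ContDiff ℝ 1 ψ) {δ : ℝ} (hδ : 0 < δ) (h0 : ∀ z, ‖z‖ < δ → ψ z = 0) :
    Cc r ((Qsq r).indicator (fun x => ψ (u x))) := by
  set w := (Qsq r).indicator (fun x => ψ (u x)) with hw
  have hcomp : ContDiff ℝ 1 (fun x => ψ (u x)) := hψ.comp hu.1
  have hcont := hu.1.continuous
  have hKc : IsClosed {x | x ∈ Ksq r ∧ δ ≤ ‖u x‖} :=
    (Ksq_compact r).isClosed.inter (isClosed_le continuous_const hcont.norm)
  have hts : tsupport w ⊆ {x | x ∈ Ksq r ∧ δ ≤ ‖u x‖} := by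
    refine closure_minimal ?_ hKc
    intro x hx
    have hxQ : x ∈ Qsq r := by
      by_contra h; exact hx (indicator_of_notMem h _)
    refine ⟨Qsq_sub r hxQ, ?_⟩
    by_contra h
    apply hx
    rw [hw, indicator_of_mem hxQ, h0 _ (not_le.1 h)]
  have hts2 : tsupport w ⊆ Qsq r := by
    intro x hx
    obtain ⟨h1, h2⟩ := hts hx
    by_contra h
    have : x ∈ frontier (Qsq r) := by
      rw [(Qsq_open r).frontier_eq, closure_Qsq hr]; exact ⟨h1, h⟩
    rw [hu.2 x this, norm_zero] at h2
    linarith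
  refine ⟨?_, hts2⟩
  rw [contDiff_iff_contDiffAt]
  intro x
  by_cases hx : x ∈ Qsq r
  · refine hcomp.contDiffAt.congr_of_eventuallyEq ?_
    filter_upwards [(Qsq_open r).mem_nhds hx] with y hy
    rw [hw, indicator_of_mem hy]
  · have hx' : x ∉ tsupport w := fun h => hx (hts2 h)
    exact (contDiffAt_const (c := (0:ℂ))).congr_of_eventuallyEq (notMem_tsupport_iff_eventuallyEq.1 hx')

lemma dens_congr {b : ℝ} {u v : ℝ × ℝ → ℂ} {x : ℝ × ℝ} (h : u =ᶠ[𝓝 x] v) :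
    dens b u x = dens b v x := by
  simp only [dens, D1, D2, h.fderiv_eq, h.eq_of_nhds]

lemma approx {b r ε : ℝ} (hb : 0 < b) (hr : 0 < r) (hε : 0 < ε) {u : ℝ × ℝ → ℂ}
    (hu : MemH10sq r u) : ∃ w, Cc r w ∧ Fsq b r w ≤ Fsq b r u + ε := by
  obtain ⟨φ, hφ, hle, hin, hout, hd0, K, hK⟩ := exists_trunc
  -- the rescaled truncations
  let N : ℕ → ℝ := fun n => (n : ℝ) + 1
  have hN : ∀ n, 0 < N n := fun n => by positivity
  let ψ : ℕ → ℂ → ℂ := fun n z => (N n)⁻¹ • φ (N n • z)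
  have hψ : ∀ n, ContDiff ℝ 1 (ψ n) := fun n =>
    (hφ.comp (contDiff_id.const_smul (N n))).const_smul (N n)⁻¹
  have hψd : ∀ n z, fderiv ℝ (ψ n) z = fderiv ℝ φ (N n • z) := by
    intro n z
    have h1 : HasFDerivAt (fun z : ℂ => N n • z) (N n • ContinuousLinearMap.id ℝ ℂ) z :=
      (hasFDerivAt_id z).const_smul (N n)
    have h2 := (hφ.differentiable one_ne_zero (N n • z)).hasFDerivAt
    have h3 := (h2.comp z h1).const_smul (N n)⁻¹
    refine h3.fderiv.trans ?_
    ext1 e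
    simp [smul_smul, (hN n).ne']
  have hψle : ∀ n z, ‖ψ n z‖ ≤ ‖z‖ := by
    intro n z
    have := hle (N n • z)
    simp only [ψ, norm_smul, norm_inv, Real.norm_eq_abs, abs_of_pos (hN n)] at this ⊢
    rw [inv_mul_le_iff₀ (hN n)]; exact this
  have hcd : ∀ n, ContDiff ℝ 1 (fun x => ψ n (u x)) := fun n => (hψ n).comp hu.1
  have hfd : ∀ n x e, fderiv ℝ (fun x => ψ n (u x)) x e =
      fderiv ℝ φ (N n • u x) (fderiv ℝ u x e) := by
    intro n x e
    have h1 := ((hψ n).differentiable one_ne_zero (u x)).hasFDerivAt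
    have h2 := (hu.1.differentiable one_ne_zero x).hasFDerivAt
    have h3 := (h1.comp x h2).fderiv
    rw [hψd] at h3
    have : fderiv ℝ (fun x => ψ n (u x)) x = fderiv ℝ φ (N n • u x) ∘L fderiv ℝ u x := h3
    rw [this]; rfl
  -- pointwise limit
  let fl : ℝ × ℝ → ℝ := {x | u x ≠ 0}.indicator (dens b u)
  have hlim : ∀ x, Tendsto (fun n => dens b (fun x => ψ n (u x)) x) atTop (𝓝 (fl x)) := by
    intro x
    by_cases hx : u x = 0
    · have : fl x = 0 := indicator_of_notMem (by simpa using hx) _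
      rw [this]
      refine tendsto_const_nhds.congr fun n => ?_
      have h0 : φ 0 = 0 := hin 0 (by simp)
      have h1 : ψ n (u x) = 0 := by simp [ψ, hx, h0]
      have h5 : N n • u x = 0 := by rw [hx, smul_zero]
      simp only [dens, D1, D2, hfd, h1, h5, hd0]
      simp
    · have : fl x = dens b u x := indicator_of_mem (show x ∈ {x | u x ≠ 0} from hx) _
      rw [this]
      refine tendsto_const_nhds.congr' ?_
      have hpos : 0 < ‖u x‖ := norm_pos_iff.2 hx
      obtain ⟨n0, hn0⟩ := exists_nat_gt (2 / ‖u x‖)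
      filter_upwards [eventually_ge_atTop n0] with n hn
      have h2 : 2 < ‖N n • u x‖ := by
        rw [norm_smul, Real.norm_eq_abs, abs_of_pos (hN n), ← div_lt_iff₀ hpos]
        have : (n0 : ℝ) ≤ n := by exact_mod_cast hn
        simp only [N]; linarith
      have h3 := hout _ h2
      have h4 : ψ n (u x) = u x := by
        simp only [ψ, h3.1, smul_smul, inv_mul_cancel₀ (hN n).ne', one_smul]
      simp only [dens, D1, D2, hfd, h4, h3.2]
      simp
  -- uniform bound
  have hKnn : 0 ≤ K := (norm_nonneg _).trans (hK 0)
  let B : ℝ × ℝ → ℝ := fun x =>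
    b * ((K * ‖fderiv ℝ u x (1, 0)‖ + ‖((A₀ x).1 : ℂ)‖ * ‖u x‖) ^ 2 +
      (K * ‖fderiv ℝ u x (0, 1)‖ + ‖((A₀ x).2 : ℂ)‖ * ‖u x‖) ^ 2) + ‖u x‖ ^ 2 + ‖u x‖ ^ 4 / 2
  have hBc : Continuous B := by
    have h1 := cont_fderiv_apply hu.1 (1, 0)
    have h2 := cont_fderiv_apply hu.1 (0, 1)
    have h3 := hu.1.continuous
    have h4 := cont_A1
    have h5 := cont_A2
    fun_prop
  have hB : ∀ n x, ‖dens b (fun x => ψ n (u x)) x‖ ≤ B x := by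
    intro n x
    have key : ∀ (e : ℝ × ℝ) (a : ℂ), ‖fderiv ℝ (fun x => ψ n (u x)) x e - Complex.I * a * ψ n (u x)‖ ^ 2
        ≤ (K * ‖fderiv ℝ u x e‖ + ‖a‖ * ‖u x‖) ^ 2 := by
      intro e a
      refine pow_le_pow_left₀ (norm_nonneg _) ?_ 2
      refine (norm_sub_le _ _).trans (add_le_add ?_ ?_)
      · rw [hfd]
        exact (ContinuousLinearMap.le_opNorm _ _).trans
          (mul_le_mul_of_nonneg_right (hK _) (norm_nonneg _))
      · rw [norm_mul, norm_mul, Complex.norm_I, one_mul]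
        exact mul_le_mul_of_nonneg_left (hψle n _) (norm_nonneg _)
    have k1 := key (1, 0) (A₀ x).1
    have k2 := key (0, 1) (A₀ x).2
    have k3 : ‖ψ n (u x)‖ ^ 2 ≤ ‖u x‖ ^ 2 := pow_le_pow_left₀ (norm_nonneg _) (hψle n _) 2
    have k4 : ‖ψ n (u x)‖ ^ 4 ≤ ‖u x‖ ^ 4 := pow_le_pow_left₀ (norm_nonneg _) (hψle n _) 4
    have k5 := mul_le_mul_of_nonneg_left (add_le_add k1 k2) hb.le
    simp only [dens, D1, D2, B]
    rw [Real.norm_eq_abs, abs_le]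
    have p1 : 0 ≤ b * (‖fderiv ℝ (fun x => ψ n (u x)) x (1, 0) - Complex.I * ((A₀ x).1 : ℂ) * ψ n (u x)‖ ^ 2
      + ‖fderiv ℝ (fun x => ψ n (u x)) x (0, 1) - Complex.I * ((A₀ x).2 : ℂ) * ψ n (u x)‖ ^ 2) := by
      positivity
    have p2 : 0 ≤ ‖ψ n (u x)‖ ^ 2 := by positivity
    have p3 : 0 ≤ ‖ψ n (u x)‖ ^ 4 := by positivity
    constructor <;> linarith
  have hconv : Tendsto (fun n => ∫ x in Qsq r, dens b (fun x => ψ n (u x)) x) atTop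
      (𝓝 (∫ x in Qsq r, fl x)) := by
    refine tendsto_integral_of_dominated_convergence B ?_ (int_Q r hBc) ?_ ?_
    · intro n; exact (cont_dens b (hcd n)).aestronglyMeasurable
    · intro n; exact Eventually.of_forall (hB n)
    · exact Eventually.of_forall hlim
  have hmeas : MeasurableSet {x | u x ≠ 0} :=
    (isOpen_ne_fun hu.1.continuous continuous_const).measurableSet
  have hfle : ∫ x in Qsq r, fl x ≤ Fsq b r u := by
    rw [Fsq_eq]
    have hi := int_Q r (cont_dens b hu.1)
    refine setIntegral_mono (hi.indicator hmeas) hi ?_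
    intro x
    by_cases hx : u x = 0
    · have : fl x = 0 := indicator_of_notMem (by simpa using hx) _
      rw [this]
      simp only [dens, hx]
      have : 0 ≤ b * (‖D1 u x‖ ^ 2 + ‖D2 u x‖ ^ 2) := by positivity
      simpa using this
    · exact (indicator_of_mem (show x ∈ {x | u x ≠ 0} from hx) _).le
  have hev := hconv.eventually (gt_mem_nhds (show ∫ x in Qsq r, fl x < Fsq b r u + ε by linarith))
  obtain ⟨n, hn⟩ := hev.exists
  refine ⟨(Qsq r).indicator (fun x => ψ n (u x)), ?_, ?_⟩
  · refine trunc_Cc hr hu (hψ n) (inv_pos.2 (hN n)) ?_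
    intro z hz
    have : φ (N n • z) = 0 := by
      apply hin
      rw [norm_smul, Real.norm_eq_abs, abs_of_pos (hN n)]
      rwa [← lt_inv_mul_iff₀ (hN n), mul_one]
    simp only [ψ, this, smul_zero]
  · refine le_of_eq_of_le ?_ hn.le
    rw [Fsq_eq]
    refine setIntegral_congr_fun (Qsq_meas r) ?_
    intro x hx
    refine dens_congr ?_
    filter_upwards [(Qsq_open r).mem_nhds hx] with y hy
    rw [indicator_of_mem hy]

/-- Linear lower bounds on compactly supported functions pass to the infimum. -/
lemma le_eD {b r α β c : ℝ} (hb : 0 < b) (hr : 0 < r) (hα : 0 < α)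
    (h : ∀ w, Cc r w → c ≤ α * Fsq b r w + β) : c ≤ α * eD b r + β := by
  have : (c - β) / α ≤ eD b r := by
    refine le_csInf ⟨_, _, mem_zero r, rfl⟩ ?_
    rintro _ ⟨u, hu, rfl⟩
    refine le_of_forall_pos_le_add fun ε hε => ?_
    obtain ⟨w, hw, hle⟩ := approx hb hr hε hu
    rw [div_le_iff₀ hα]
    have h1 := h w hw
    have h2 := mul_le_mul_of_nonneg_left hle hα.le
    linarith
  rw [div_le_iff₀ hα] at this
  linarith

/-- The gauge phase. -/
def gph (y x : ℝ × ℝ) : ℂ :=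
  Complex.exp (Complex.I * ((-((A₀ y).1 * x.1 + (A₀ y).2 * x.2) : ℝ) : ℂ))

lemma norm_gph (y x : ℝ × ℝ) : ‖gph y x‖ = 1 := by
  rw [gph, mul_comm, Complex.norm_exp_ofReal_mul_I]

lemma gph_contDiff (y : ℝ × ℝ) : ContDiff ℝ 1 (gph y) := by
  unfold gph
  refine ContDiff.cexp (contDiff_const.mul ?_)
  exact Complex.ofRealCLM.contDiff.comp
    ((contDiff_const.mul contDiff_fst).add (contDiff_const.mul contDiff_snd)).neg

lemma gph_fderiv (y x e : ℝ × ℝ) : fderiv ℝ (gph y) x e =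
    gph y x * (Complex.I * ((-((A₀ y).1 * e.1 + (A₀ y).2 * e.2) : ℝ) : ℂ)) := by
  let L : ℝ × ℝ →L[ℝ] ℝ := -((A₀ y).1 • ContinuousLinearMap.fst ℝ ℝ ℝ +
    (A₀ y).2 • ContinuousLinearMap.snd ℝ ℝ ℝ)
  have h1 : HasFDerivAt (fun x : ℝ × ℝ => ((L x : ℝ) : ℂ)) (Complex.ofRealCLM ∘L L) x :=
    (Complex.ofRealCLM ∘L L).hasFDerivAt
  have h2 := (h1.const_mul Complex.I).cexp
  have h3 : gph y = fun x => Complex.exp (Complex.I * ((L x : ℝ) : ℂ)) := by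
    funext x; simp [gph, L]
  rw [h3, h2.fderiv]
  simp [L]
  ring

/-- Magnetic translation. -/
def mtr (y : ℝ × ℝ) (v : ℝ × ℝ → ℂ) (x : ℝ × ℝ) : ℂ := gph y x * v (x + y)

lemma mtr_contDiff (y : ℝ × ℝ) {v : ℝ × ℝ → ℂ} (hv : ContDiff ℝ 1 v) : ContDiff ℝ 1 (mtr y v) :=
  (gph_contDiff y).mul (hv.comp (contDiff_id.add contDiff_const))

lemma mtr_fderiv (y : ℝ × ℝ) {v : ℝ × ℝ → ℂ} (hv : ContDiff ℝ 1 v) (x e : ℝ × ℝ) :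
    fderiv ℝ (mtr y v) x e = gph y x * (fderiv ℝ v (x + y) e
      - Complex.I * (((A₀ y).1 * e.1 + (A₀ y).2 * e.2 : ℝ) : ℂ) * v (x + y)) := by
  have h1 := ((gph_contDiff y).differentiable one_ne_zero x).hasFDerivAt
  have h2 : HasFDerivAt (fun x => v (x + y)) (fderiv ℝ v (x + y)) x :=
    (hasFDerivAt_comp_add_right y).2 (hv.differentiable one_ne_zero (x + y)).hasFDerivAt
  have h3 : fderiv ℝ (mtr y v) x = _ := (h1.mul h2).fderiv
  rw [h3]
  simp [gph_fderiv]
  ring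

lemma mtr_D1 (y : ℝ × ℝ) {v : ℝ × ℝ → ℂ} (hv : ContDiff ℝ 1 v) (x : ℝ × ℝ) :
    D1 (mtr y v) x = gph y x * D1 v (x + y) := by
  rw [D1, mtr_fderiv y hv, D1, mtr]
  simp [A₀]
  ring

lemma mtr_D2 (y : ℝ × ℝ) {v : ℝ × ℝ → ℂ} (hv : ContDiff ℝ 1 v) (x : ℝ × ℝ) :
    D2 (mtr y v) x = gph y x * D2 v (x + y) := by
  rw [D2, mtr_fderiv y hv, D2, mtr]
  simp [A₀]
  ring

lemma mtr_dens (b : ℝ) (y : ℝ × ℝ) {v : ℝ × ℝ → ℂ} (hv : ContDiff ℝ 1 v) (x : ℝ × ℝ) :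
    dens b (mtr y v) x = dens b v (x + y) := by
  rw [dens, mtr_D1 y hv, mtr_D2 y hv, mtr, dens]
  simp [norm_gph]

lemma mtr_tsupport (y : ℝ × ℝ) (v : ℝ × ℝ → ℂ) :
    tsupport (mtr y v) ⊆ {x | x + y ∈ tsupport v} := by
  refine closure_minimal ?_ ((isClosed_tsupport v).preimage (continuous_id.add continuous_const))
  intro x hx
  refine subset_tsupport v ?_
  intro h
  exact hx (by simp [mtr, h])

/-- Functions with integrable energy density supported in `S`. -/
lemma dens_add (b : ℝ) {u v : ℝ × ℝ → ℂ} (h : Disjoint (tsupport u) (tsupport v)) (x : ℝ × ℝ) :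
    dens b (u + v) x = dens b u x + dens b v x := by
  by_cases hx : x ∈ tsupport u
  · have hv : x ∉ tsupport v := fun h' => disjoint_left.1 h hx h'
    rw [dens_zero hv, add_zero]
    refine dens_congr ?_
    filter_upwards [notMem_tsupport_iff_eventuallyEq.1 hv] with y hy
    simp [hy]
  · rw [dens_zero hx, zero_add]
    refine dens_congr ?_
    filter_upwards [notMem_tsupport_iff_eventuallyEq.1 hx] with y hy
    simp [hy]

lemma doubling {b r : ℝ} (hb : 0 < b) (hr : 0 < r) : eD b (2 * r) ≤ 4 * eD b r := by
  have := le_eD (b := b) (r := r) (α := 4) (β := 0) (c := eD b (2 * r)) hb hr (by norm_num) ?_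
  · linarith
  intro w hw
  have hts : ∀ y x : ℝ × ℝ, x ∈ tsupport (mtr y w) → x + y ∈ Qsq r :=
    fun y x hx => hw.2 (mtr_tsupport y w hx)
  have hi : ∀ y, Integrable (dens b (mtr y w)) := by
    intro y
    have : dens b (mtr y w) = fun x => dens b w (x + y) := funext (mtr_dens b y hw.1)
    rw [this]; exact hw.int_dens.comp_add_right y
  have hv : ∀ y, ∫ x, dens b (mtr y w) x = Fsq b r w := by
    intro y
    have : dens b (mtr y w) = fun x => dens b w (x + y) := funext (mtr_dens b y hw.1)
    rw [this, hw.Fsq_full, integral_add_right_eq_self]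
  have hQ : ∀ x : ℝ × ℝ, x ∈ Qsq r ↔ (-r/2 < x.1 ∧ x.1 < r/2) ∧ (-r/2 < x.2 ∧ x.2 < r/2) :=
    fun x => Iff.rfl
  let a := mtr (r/2, r/2) w
  let c := mtr (r/2, -r/2) w
  let d := mtr (-r/2, r/2) w
  let e := mtr (-r/2, -r/2) w
  have hac : Disjoint (tsupport a) (tsupport c) := by
    refine disjoint_left.2 fun x h1 h2 => ?_
    have h3 := (hQ _).1 (hts _ _ h1)
    have h4 := (hQ _).1 (hts _ _ h2)
    simp only [Prod.fst_add, Prod.snd_add] at h3 h4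
    linarith [h3.2.2, h4.2.1]
  have hde : Disjoint (tsupport d) (tsupport e) := by
    refine disjoint_left.2 fun x h1 h2 => ?_
    have h3 := (hQ _).1 (hts _ _ h1)
    have h4 := (hQ _).1 (hts _ _ h2)
    simp only [Prod.fst_add, Prod.snd_add] at h3 h4
    linarith [h3.2.2, h4.2.1]
  have hl : ∀ x ∈ tsupport (a + c), x.1 < 0 := by
    intro x hx
    rcases tsupport_add a c hx with h | h
    · have h3 := (hQ _).1 (hts _ _ h)
      simp only [Prod.fst_add, Prod.snd_add] at h3
      linarith [h3.1.2]
    · have h3 := (hQ _).1 (hts _ _ h)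
      simp only [Prod.fst_add, Prod.snd_add] at h3
      linarith [h3.1.2]
  have hrt : ∀ x ∈ tsupport (d + e), 0 < x.1 := by
    intro x hx
    rcases tsupport_add d e hx with h | h
    · have h3 := (hQ _).1 (hts _ _ h)
      simp only [Prod.fst_add, Prod.snd_add] at h3
      linarith [h3.1.1]
    · have h3 := (hQ _).1 (hts _ _ h)
      simp only [Prod.fst_add, Prod.snd_add] at h3
      linarith [h3.1.1]
  have hdis : Disjoint (tsupport (a + c)) (tsupport (d + e)) :=
    disjoint_left.2 fun x h1 h2 => lt_asymm (hl x h1) (hrt x h2)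
  have hCc : Cc (2 * r) ((a + c) + (d + e)) := by
    have hm := fun y => mtr_contDiff y hw.1
    refine ⟨((hm _).add (hm _)).add ((hm _).add (hm _)), ?_⟩
    intro x hx
    have hQ2 : x ∈ Qsq (2 * r) ↔
      (-(2*r)/2 < x.1 ∧ x.1 < (2*r)/2) ∧ (-(2*r)/2 < x.2 ∧ x.2 < (2*r)/2) := Iff.rfl
    rw [hQ2]
    rcases tsupport_add _ _ hx with h | h <;> rcases tsupport_add _ _ h with h | h <;>
    · have h3 := (hQ _).1 (hts _ _ h)
      simp only [Prod.fst_add, Prod.snd_add] at h3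
      obtain ⟨⟨_, _⟩, _, _⟩ := h3
      refine ⟨⟨?_, ?_⟩, ?_, ?_⟩ <;> linarith
  refine (eD_le hb (by linarith) hCc.mem).trans (le_of_eq ?_)
  rw [hCc.Fsq_full]
  have : dens b ((a + c) + (d + e)) = fun x => (dens b a x + dens b c x) + (dens b d x + dens b e x) := by
    funext x
    rw [dens_add b hdis, dens_add b hac, dens_add b hde]
  rw [this]
  have e1 := integral_add (f := fun x => dens b a x + dens b c x)
    (g := fun x => dens b d x + dens b e x) ((hi _).add (hi _)) ((hi _).add (hi _))
  have e2 := integral_add (f := dens b a) (g := dens b c) (hi _) (hi _)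
  have e3 := integral_add (f := dens b d) (g := dens b e) (hi _) (hi _)
  have f1 : ∫ x, dens b a x = Fsq b r w := hv _
  have f2 : ∫ x, dens b c x = Fsq b r w := hv _
  have f3 : ∫ x, dens b d x = Fsq b r w := hv _
  have f4 : ∫ x, dens b e x = Fsq b r w := hv _
  refine e1.trans ?_
  rw [e2, e3, f1, f2, f3, f4]
  ring

lemma lower_bound {g : ℝ → ℝ} (hg : IsLimitG g) {b r : ℝ} (hb : 0 < b) (hr : 0 < r) :
    g b ≤ eD b r / r ^ 2 := by
  have hk : ∀ k : ℕ, eD b (2 ^ k * r) ≤ 4 ^ k * eD b r := by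
    intro k
    induction k with
    | zero => simp
    | succ k ih =>
      have h := doubling hb (show 0 < 2 ^ k * r by positivity)
      rw [pow_succ', pow_succ', mul_assoc, mul_assoc]
      linarith
  have ht : Tendsto (fun k : ℕ => (2:ℝ) ^ k * r) atTop atTop :=
    (tendsto_pow_atTop_atTop_of_one_lt one_lt_two).atTop_mul_const hr
  refine le_of_tendsto ((hg b hb).comp ht) (Eventually.of_forall fun k => ?_)
  simp only [Function.comp]
  rw [div_le_div_iff₀ (by positivity) (by positivity)]
  have h4 : ((2:ℝ) ^ k * r) ^ 2 = 4 ^ k * r ^ 2 := by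
    rw [mul_pow, ← pow_mul, mul_comm k 2, pow_mul]; norm_num
  rw [h4]
  have := mul_le_mul_of_nonneg_right (hk k) (sq_nonneg r)
  linarith

lemma sumFour {s : Set (ℝ × ℝ)} {f1 f2 f3 f4 : ℝ × ℝ → ℝ} (h1 : IntegrableOn f1 s)
    (h2 : IntegrableOn f2 s) (h3 : IntegrableOn f3 s) (h4 : IntegrableOn f4 s) :
    IntegrableOn (fun x => f1 x + f2 x + f3 x + f4 x) s ∧
    ∫ x in s, (f1 x + f2 x + f3 x + f4 x) =
      (∫ x in s, f1 x) + (∫ x in s, f2 x) + (∫ x in s, f3 x) + ∫ x in s, f4 x := by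
  have e1 : IntegrableOn (fun x => f1 x + f2 x) s := h1.add h2
  have e2 : IntegrableOn (fun x => f1 x + f2 x + f3 x) s := e1.add h3
  exact ⟨e2.add h4, by rw [integral_add e2 h4, integral_add e1 h3, integral_add h1 h2]⟩

lemma slide_integrable {ρ R : ℝ} {a c : ℝ × ℝ → ℝ} (ha : Continuous a) (hc : Continuous c) :
    Integrable (Function.uncurry fun y x : ℝ × ℝ => a x * c (x + y))
      ((volume.restrict (Qsq R)).prod (volume.restrict (Qsq ρ))) := by
  rw [Measure.prod_restrict]
  have hcont : Continuous (Function.uncurry fun y x : ℝ × ℝ => a x * c (x + y)) := by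
    unfold Function.uncurry
    fun_prop
  have := hcont.continuousOn.integrableOn_compact (μ := (volume : Measure (ℝ × ℝ)).prod volume)
    ((Ksq_compact R).prod (Ksq_compact ρ))
  exact this.mono_set (prod_mono (Qsq_sub R) (Qsq_sub ρ))

lemma slide {ρ R : ℝ} {a c : ℝ × ℝ → ℝ} (ha : Continuous a) (hc : Continuous c)
    (h0 : ∀ z, z ∉ Qsq R → c z = 0) :
    ∫ y in Qsq (R + ρ), ∫ x in Qsq ρ, a x * c (x + y) = (∫ x in Qsq ρ, a x) * ∫ z, c z := by
  rw [integral_integral_swap (slide_integrable ha hc), ← integral_mul_const]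
  refine setIntegral_congr_fun (Qsq_meas ρ) fun x hx => ?_
  have h1 : ∫ y in Qsq (R + ρ), a x * c (x + y) = ∫ y, a x * c (x + y) := by
    refine setIntegral_eq_integral_of_forall_compl_eq_zero fun y hy => ?_
    rw [h0, mul_zero]
    intro hz
    apply hy
    have hx' : (-ρ/2 < x.1 ∧ x.1 < ρ/2) ∧ (-ρ/2 < x.2 ∧ x.2 < ρ/2) := hx
    have hz' : (-R/2 < x.1 + y.1 ∧ x.1 + y.1 < R/2) ∧ (-R/2 < x.2 + y.2 ∧ x.2 + y.2 < R/2) := hz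
    have : (-(R+ρ)/2 < y.1 ∧ y.1 < (R+ρ)/2) ∧ (-(R+ρ)/2 < y.2 ∧ y.2 < (R+ρ)/2) := by
      obtain ⟨⟨_, _⟩, _, _⟩ := hx'
      obtain ⟨⟨_, _⟩, _, _⟩ := hz'
      refine ⟨⟨?_, ?_⟩, ?_, ?_⟩ <;> linarith
    exact this
  simp only [h1]
  rw [integral_const_mul, integral_add_left_eq_self]

lemma slide_int_left {ρ R : ℝ} {a c : ℝ × ℝ → ℝ} (ha : Continuous a) (hc : Continuous c) :
    IntegrableOn (fun y => ∫ x in Qsq ρ, a x * c (x + y)) (Qsq R) :=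
  (slide_integrable ha hc).integral_prod_left

/-- First component of the supercurrent-like density. -/
def j1 (v : ℝ × ℝ → ℂ) (z : ℝ × ℝ) : ℝ := (v z).re * (D1 v z).re + (v z).im * (D1 v z).im

/-- Second component. -/
def j2 (v : ℝ × ℝ → ℂ) (z : ℝ × ℝ) : ℝ := (v z).re * (D2 v z).re + (v z).im * (D2 v z).im

lemma norm_expand (χ p : ℝ) (d w e : ℂ) (he : ‖e‖ = 1) :
    ‖(χ : ℂ) * (e * d) + (p : ℂ) * (e * w)‖ ^ 2 =
      χ ^ 2 * ‖d‖ ^ 2 + 2 * χ * p * (w.re * d.re + w.im * d.im) + p ^ 2 * ‖w‖ ^ 2 := by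
  have : (χ : ℂ) * (e * d) + (p : ℂ) * (e * w) = e * (χ * d + p * w) := by ring
  rw [this, norm_mul, he, one_mul, ← Complex.normSq_eq_norm_sq, ← Complex.normSq_eq_norm_sq,
    ← Complex.normSq_eq_norm_sq]
  simp [Complex.normSq_apply]
  ring

lemma cut_fderiv {χ : ℝ × ℝ → ℝ} (hχ : ContDiff ℝ 1 χ) {w : ℝ × ℝ → ℂ} (hw : ContDiff ℝ 1 w)
    (x e : ℝ × ℝ) : fderiv ℝ (fun x => (χ x : ℂ) * w x) x e =
      (χ x : ℂ) * fderiv ℝ w x e + ((fderiv ℝ χ x e : ℝ) : ℂ) * w x := by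
  have h1 := (hχ.differentiable one_ne_zero x).hasFDerivAt
  have h2 := (hw.differentiable one_ne_zero x).hasFDerivAt
  have h3 : HasFDerivAt (fun x => (χ x : ℂ)) (Complex.ofRealCLM ∘L fderiv ℝ χ x) x :=
    Complex.ofRealCLM.hasFDerivAt.comp x h1
  have h4 : fderiv ℝ (fun x => (χ x : ℂ) * w x) x = _ := (h3.mul h2).fderiv
  rw [h4]
  simp
  ring

lemma cut_dens (b : ℝ) {χ : ℝ × ℝ → ℝ} (hχ : ContDiff ℝ 1 χ) {v : ℝ × ℝ → ℂ}
    (hv : ContDiff ℝ 1 v) (y x : ℝ × ℝ) (h0 : 0 ≤ χ x) (h1 : χ x ≤ 1) :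
    dens b (fun x => (χ x : ℂ) * mtr y v x) x ≤
      χ x ^ 2 * dens b v (x + y) + (2 * b * (χ x * fderiv ℝ χ x (1, 0))) * j1 v (x + y)
      + (2 * b * (χ x * fderiv ℝ χ x (0, 1))) * j2 v (x + y)
      + (b * (fderiv ℝ χ x (1, 0) ^ 2 + fderiv ℝ χ x (0, 1) ^ 2)) * ‖v (x + y)‖ ^ 2 := by
  have hm := mtr_contDiff y hv
  have e1 : D1 (fun x => (χ x : ℂ) * mtr y v x) x =
      (χ x : ℂ) * (gph y x * D1 v (x + y))
        + ((fderiv ℝ χ x (1, 0) : ℝ) : ℂ) * (gph y x * v (x + y)) := by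
    rw [← mtr_D1 y hv, D1, cut_fderiv hχ hm, D1]
    simp only [mtr]; ring
  have e2 : D2 (fun x => (χ x : ℂ) * mtr y v x) x =
      (χ x : ℂ) * (gph y x * D2 v (x + y))
        + ((fderiv ℝ χ x (0, 1) : ℝ) : ℂ) * (gph y x * v (x + y)) := by
    rw [← mtr_D2 y hv, D2, cut_fderiv hχ hm, D2]
    simp only [mtr]; ring
  have e3 : ‖(χ x : ℂ) * mtr y v x‖ = χ x * ‖v (x + y)‖ := by
    rw [mtr, norm_mul, norm_mul, norm_gph, one_mul, Complex.norm_real, Real.norm_eq_abs,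
      abs_of_nonneg h0]
  simp only [dens]
  rw [e1, e2, e3, norm_expand _ _ _ _ _ (norm_gph y x), norm_expand _ _ _ _ _ (norm_gph y x)]
  simp only [j1, j2]
  have h2 : χ x ^ 4 ≤ χ x ^ 2 := pow_le_pow_of_le_one h0 h1 (by norm_num)
  have h3 := mul_le_mul_of_nonneg_right h2 (show 0 ≤ ‖v (x + y)‖ ^ 4 / 2 by positivity)
  rw [mul_pow, mul_pow]
  linarith

lemma sliding {b ρ R : ℝ} (hb : 0 < b) (hρ : 0 < ρ) (hR : 0 < R) {χ : ℝ × ℝ → ℝ}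
    (hχ : ContDiff ℝ 1 χ) (hfr : ∀ x ∈ frontier (Qsq ρ), χ x = 0)
    (h01 : ∀ x ∈ Qsq ρ, 0 ≤ χ x ∧ χ x ≤ 1)
    (hp : ∫ x in Qsq ρ, χ x * fderiv ℝ χ x (1, 0) = 0)
    (hq : ∫ x in Qsq ρ, χ x * fderiv ℝ χ x (0, 1) = 0)
    {v : ℝ × ℝ → ℂ} (hv : Cc R v) :
    eD b ρ * (R + ρ) ^ 2 ≤ (∫ x in Qsq ρ, χ x ^ 2) * Fsq b R v +
      b * (∫ x in Qsq ρ, (fderiv ℝ χ x (1, 0) ^ 2 + fderiv ℝ χ x (0, 1) ^ 2)) *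
        (2 * R ^ 2 + Fsq b R v) := by
  set p : ℝ × ℝ → ℝ := fun x => fderiv ℝ χ x (1, 0) with hpdef
  set q : ℝ × ℝ → ℝ := fun x => fderiv ℝ χ x (0, 1) with hqdef
  have cp : Continuous p := (hχ.continuous_fderiv one_ne_zero).clm_apply continuous_const
  have cq : Continuous q := (hχ.continuous_fderiv one_ne_zero).clm_apply continuous_const
  have cχ := hχ.continuous
  have cv := hv.1.continuous
  have cd1 := cont_D1 hv.1
  have cd2 := cont_D2 hv.1
  have cj1 : Continuous (j1 v) := 
    ((Complex.continuous_re.comp cv).mul (Complex.continuous_re.comp cd1)).add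
      ((Complex.continuous_im.comp cv).mul (Complex.continuous_im.comp cd1))
  have cj2 : Continuous (j2 v) := 
    ((Complex.continuous_re.comp cv).mul (Complex.continuous_re.comp cd2)).add
      ((Complex.continuous_im.comp cv).mul (Complex.continuous_im.comp cd2))
  have cde := cont_dens b hv.1
  have vz : ∀ z, z ∉ Qsq R → v z = 0 := fun z hz =>
    image_eq_zero_of_notMem_tsupport fun h => hz (hv.2 h)
  -- the four terms
  let a1 : ℝ × ℝ → ℝ := fun x => χ x ^ 2
  let a2 : ℝ × ℝ → ℝ := fun x => 2 * b * (χ x * p x)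
  let a3 : ℝ × ℝ → ℝ := fun x => 2 * b * (χ x * q x)
  let a4 : ℝ × ℝ → ℝ := fun x => b * (p x ^ 2 + q x ^ 2)
  let c4 : ℝ × ℝ → ℝ := fun z => ‖v z‖ ^ 2
  have ca1 : Continuous a1 := by fun_prop
  have ca2 : Continuous a2 := by fun_prop
  have ca3 : Continuous a3 := by fun_prop
  have ca4 : Continuous a4 := by fun_prop
  have cc4 : Continuous c4 := by fun_prop
  have s1 := slide (ρ := ρ) (R := R) ca1 cde fun z hz => dens_zero fun h => hz (hv.2 h)
  have s2 := slide (ρ := ρ) (R := R) ca2 cj1 fun z hz => by simp [j1, vz z hz]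
  have s3 := slide (ρ := ρ) (R := R) ca3 cj2 fun z hz => by simp [j2, vz z hz]
  have s4 := slide (ρ := ρ) (R := R) ca4 cc4 fun z hz => by simp [c4, vz z hz]
  have i1 := slide_int_left (ρ := ρ) (R := R + ρ) ca1 cde
  have i2 := slide_int_left (ρ := ρ) (R := R + ρ) ca2 cj1
  have i3 := slide_int_left (ρ := ρ) (R := R + ρ) ca3 cj2
  have i4 := slide_int_left (ρ := ρ) (R := R + ρ) ca4 cc4
  have hy : ∀ y, eD b ρ ≤ (∫ x in Qsq ρ, a1 x * dens b v (x + y)) + (∫ x in Qsq ρ, a2 x * j1 v (x + y))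
      + (∫ x in Qsq ρ, a3 x * j2 v (x + y)) + ∫ x in Qsq ρ, a4 x * c4 (x + y) := by
    intro y
    have hcd : ContDiff ℝ 1 (fun x => (χ x : ℂ) * mtr y v x) :=
      (Complex.ofRealCLM.contDiff.comp hχ).mul (mtr_contDiff y hv.1)
    have hmem : MemH10sq ρ (fun x => (χ x : ℂ) * mtr y v x) :=
      ⟨hcd, fun x hx => by simp [hfr x hx]⟩
    have k1 : IntegrableOn (fun x => a1 x * dens b v (x + y)) (Qsq ρ) := int_Q ρ (by fun_prop)
    have k2 : IntegrableOn (fun x => a2 x * j1 v (x + y)) (Qsq ρ) := int_Q ρ (by fun_prop)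
    have k3 : IntegrableOn (fun x => a3 x * j2 v (x + y)) (Qsq ρ) := int_Q ρ (by fun_prop)
    have k4 : IntegrableOn (fun x => a4 x * c4 (x + y)) (Qsq ρ) := int_Q ρ (by fun_prop)
    refine (eD_le hb hρ.le hmem).trans ?_
    rw [← (sumFour k1 k2 k3 k4).2, Fsq_eq]
    refine setIntegral_mono_on (int_Q ρ (cont_dens b hcd)) (sumFour k1 k2 k3 k4).1
      (Qsq_meas ρ) fun x hx => ?_
    exact cut_dens b hχ hv.1 y x (h01 x hx).1 (h01 x hx).2
  have hmain := setIntegral_mono (μ := volume) (s := Qsq (R + ρ)) (f := fun _ => eD b ρ)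
    (integrableOn_const (vol_Q_lt (R + ρ)).ne) (sumFour i1 i2 i3 i4).1 hy
  have hsum : ∫ y in Qsq (R + ρ), ((∫ x in Qsq ρ, a1 x * dens b v (x + y))
      + (∫ x in Qsq ρ, a2 x * j1 v (x + y))
      + (∫ x in Qsq ρ, a3 x * j2 v (x + y)) + ∫ x in Qsq ρ, a4 x * c4 (x + y)) =
      (∫ x in Qsq ρ, a1 x) * (∫ z, dens b v z) + (∫ x in Qsq ρ, a2 x) * (∫ z, j1 v z)
      + (∫ x in Qsq ρ, a3 x) * (∫ z, j2 v z) + (∫ x in Qsq ρ, a4 x) * (∫ z, c4 z) := by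
    rw [← s1, ← s2, ← s3, ← s4]
    exact (sumFour i1 i2 i3 i4).2
  have hmain2 := hmain.trans_eq hsum
  rw [setIntegral_const, vol_Q (by linarith), smul_eq_mul] at hmain2
  have z2 : ∫ x in Qsq ρ, a2 x = 0 := by
    simp only [a2]; rw [integral_const_mul, hp, mul_zero]
  have z3 : ∫ x in Qsq ρ, a3 x = 0 := by
    simp only [a3]; rw [integral_const_mul, hq, mul_zero]
  have z4 : ∫ x in Qsq ρ, a4 x = b * ∫ x in Qsq ρ, (p x ^ 2 + q x ^ 2) := by
    simp only [a4]; rw [integral_const_mul]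
  have hN : ∫ z, c4 z ≤ 2 * R ^ 2 + Fsq b R v := by
    have e : ∫ z, c4 z = ∫ z in Qsq R, c4 z :=
      (setIntegral_eq_integral_of_forall_compl_eq_zero fun z hz => by simp [c4, vz z hz]).symm
    have m := setIntegral_mono (μ := volume) (s := Qsq R) (f := fun z => c4 z - 2)
      ((int_Q R cc4).sub (integrableOn_const (vol_Q_lt R).ne)) (int_Q R cde) (fun z => by
        simp only [dens, c4]
        have : 0 ≤ b * (‖D1 v z‖ ^ 2 + ‖D2 v z‖ ^ 2) := by positivity
        nlinarith [sq_nonneg (‖v z‖ ^ 2 - 2)])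
    rw [integral_sub (int_Q R cc4) (integrableOn_const (vol_Q_lt R).ne), setIntegral_const,
      vol_Q hR.le, smul_eq_mul] at m
    rw [e, Fsq_eq]; linarith
  rw [z2, z3, z4, ← hv.Fsq_full] at hmain2
  have hD : 0 ≤ b * ∫ x in Qsq ρ, (p x ^ 2 + q x ^ 2) :=
    mul_nonneg hb.le (integral_nonneg fun x => by positivity)
  have := mul_le_mul_of_nonneg_left hN hD
  linarith

/-- One-dimensional cutoff. -/
def eta (ρ : ℝ) (m : ℕ) (t : ℝ) : ℝ := 1 - (2 * t / ρ) ^ (2 * m)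

/-- Its derivative. -/
def deta (ρ : ℝ) (m : ℕ) (t : ℝ) : ℝ := -((2 * m : ℕ) * (2 * t / ρ) ^ (2 * m - 1) * (2 / ρ))

lemma eta_deriv (ρ : ℝ) (m : ℕ) (t : ℝ) : HasDerivAt (eta ρ m) (deta ρ m t) t := by
  have h1 : HasDerivAt (fun t : ℝ => 2 * t / ρ) (2 / ρ) t := by
    simpa using ((hasDerivAt_id t).const_mul 2).div_const ρ
  exact (h1.pow (2 * m)).const_sub 1

lemma eta_cont (ρ : ℝ) (m : ℕ) : Continuous (eta ρ m) := by unfold eta; fun_prop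

lemma deta_cont (ρ : ℝ) (m : ℕ) : Continuous (deta ρ m) := by unfold deta; fun_prop

lemma int_pow_scaled {ρ : ℝ} (hρ : 0 < ρ) (k : ℕ) :
    ∫ t in (-ρ/2)..(ρ/2), (2 * t / ρ) ^ (2 * k) = ρ / (2 * k + 1) := by
  have h : ∀ t ∈ uIcc (-ρ/2) (ρ/2), HasDerivAt
      (fun t : ℝ => (ρ / 2) * (2 * t / ρ) ^ (2 * k + 1) / (2 * k + 1)) ((2 * t / ρ) ^ (2 * k)) t := by
    intro t _
    have h1 : HasDerivAt (fun t : ℝ => 2 * t / ρ) (2 / ρ) t := by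
      simpa using ((hasDerivAt_id t).const_mul 2).div_const ρ
    have this : (2 * (k:ℝ) + 1) ≠ 0 := by positivity
    have h2 : ρ / 2 * (((2 * k + 1 : ℕ) : ℝ) * (2 * t / ρ) ^ (2 * k + 1 - 1) * (2 / ρ)) / (2 * k + 1)
        = (2 * t / ρ) ^ (2 * k) := by
      rw [Nat.add_sub_cancel]
      push_cast
      generalize (2 * t / ρ) ^ (2 * k) = X
      field_simp
    have h3 := (((h1.pow (2 * k + 1)).const_mul (ρ / 2)).div_const (2 * k + 1 : ℝ))
    rw [h2] at h3
    exact h3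
  rw [intervalIntegral.integral_eq_sub_of_hasDerivAt h
    (Continuous.intervalIntegrable (by fun_prop) _ _)]
  have e1 : 2 * (ρ / 2) / ρ = 1 := by field_simp
  have e2 : 2 * (-ρ / 2) / ρ = -1 := by field_simp
  rw [e1, e2, Odd.neg_one_pow ⟨k, rfl⟩]
  ring

lemma int_Ioo {ρ : ℝ} (hρ : 0 < ρ) (f : ℝ → ℝ) :
    ∫ t in Ioo (-ρ/2) (ρ/2), f t = ∫ t in (-ρ/2)..(ρ/2), f t := by
  rw [intervalIntegral.integral_of_le (by linarith), integral_Ioc_eq_integral_Ioo]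

lemma eta_01 {ρ : ℝ} (hρ : 0 < ρ) (m : ℕ) {t : ℝ} (ht : t ∈ Icc (-ρ/2) (ρ/2)) :
    0 ≤ eta ρ m t ∧ eta ρ m t ≤ 1 := by
  have h1 : |2 * t / ρ| ≤ 1 := by
    rw [abs_le, le_div_iff₀ hρ, div_le_iff₀ hρ]
    constructor <;> linarith [ht.1, ht.2]
  have h2 : (2 * t / ρ) ^ (2 * m) ≤ 1 := by
    rw [pow_mul]
    exact pow_le_one₀ (sq_nonneg _) ((sq_le_one_iff_abs_le_one _).2 h1)
  have h3 : 0 ≤ (2 * t / ρ) ^ (2 * m) := by rw [pow_mul]; positivity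
  unfold eta
  constructor <;> linarith

lemma eta_end {ρ : ℝ} (hρ : 0 < ρ) (m : ℕ) : eta ρ m (ρ/2) = 0 ∧ eta ρ m (-ρ/2) = 0 := by
  have e1 : 2 * (ρ / 2) / ρ = 1 := by field_simp
  have e2 : 2 * (-ρ / 2) / ρ = -1 := by field_simp
  unfold eta
  rw [e1, e2]
  simp [pow_mul]

lemma int_eta_deta {ρ : ℝ} (hρ : 0 < ρ) (m : ℕ) :
    ∫ t in Ioo (-ρ/2) (ρ/2), eta ρ m t * deta ρ m t = 0 := by
  rw [int_Ioo hρ]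
  have h : ∀ t ∈ uIcc (-ρ/2) (ρ/2), HasDerivAt (fun t => (eta ρ m t) ^ 2 / 2)
      (eta ρ m t * deta ρ m t) t := by
    intro t _
    have h2 : ((2 : ℕ) : ℝ) * eta ρ m t ^ (2 - 1) * deta ρ m t / 2 = eta ρ m t * deta ρ m t := by
      simp
      ring
    have h3 := ((eta_deriv ρ m t).pow 2).div_const 2
    rw [h2] at h3
    exact h3
  rw [intervalIntegral.integral_eq_sub_of_hasDerivAt h
    (((eta_cont ρ m).mul (deta_cont ρ m)).intervalIntegrable _ _)]
  rw [(eta_end hρ m).1, (eta_end hρ m).2]; ring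

lemma int_eta_sq_le {ρ : ℝ} (hρ : 0 < ρ) (m : ℕ) :
    ∫ t in Ioo (-ρ/2) (ρ/2), eta ρ m t ^ 2 ≤ ρ := by
  rw [int_Ioo hρ]
  have := intervalIntegral.integral_mono_on (a := -ρ/2) (b := ρ/2) (μ := volume)
    (f := fun t => eta ρ m t ^ 2) (g := fun _ => (1:ℝ)) (by linarith)
    (((eta_cont ρ m).pow 2).intervalIntegrable _ _) (continuous_const.intervalIntegrable _ _)
    (fun t ht => pow_le_one₀ (eta_01 hρ m ht).1 (eta_01 hρ m ht).2)
  rw [intervalIntegral.integral_const, smul_eq_mul] at this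
  linarith

lemma int_eta_sq_ge {ρ : ℝ} (hρ : 0 < ρ) {m : ℕ} (hm : 1 ≤ m) :
    ρ * (1 - 1 / m) ≤ ∫ t in Ioo (-ρ/2) (ρ/2), eta ρ m t ^ 2 := by
  rw [int_Ioo hρ]
  have cpow : Continuous (fun t : ℝ => 2 * (2 * t / ρ) ^ (2 * m)) := by fun_prop
  have := intervalIntegral.integral_mono_on (a := -ρ/2) (b := ρ/2) (μ := volume)
    (g := fun t => eta ρ m t ^ 2) (f := fun t => 1 - 2 * (2 * t / ρ) ^ (2 * m)) (by linarith)
    ((continuous_const.sub cpow).intervalIntegrable _ _)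
    (((eta_cont ρ m).pow 2).intervalIntegrable _ _)
    (fun t ht => by unfold eta; nlinarith [sq_nonneg ((2 * t / ρ) ^ (2 * m))])
  rw [intervalIntegral.integral_sub (continuous_const.intervalIntegrable _ _)
    (cpow.intervalIntegrable _ _), intervalIntegral.integral_const, smul_eq_mul,
    intervalIntegral.integral_const_mul, int_pow_scaled hρ] at this
  refine le_trans ?_ this
  have hm' : (1:ℝ) ≤ m := by exact_mod_cast hm
  have h2 : 2 * (ρ / (2 * m + 1)) ≤ ρ * (1 / m) := by
    rw [mul_one_div, mul_div_assoc', div_le_div_iff₀ (by positivity) (by positivity)]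
    nlinarith
  linarith

lemma int_deta_sq {ρ : ℝ} (hρ : 0 < ρ) {m : ℕ} (hm : 1 ≤ m) :
    ∫ t in Ioo (-ρ/2) (ρ/2), deta ρ m t ^ 2 ≤ 8 * m / ρ := by
  rw [int_Ioo hρ]
  have e : ∀ t, deta ρ m t ^ 2 = (16 * m ^ 2 / ρ ^ 2) * (2 * t / ρ) ^ (2 * (2 * m - 1)) := by
    intro t
    rw [deta, pow_mul', neg_sq, mul_pow, mul_pow]
    push_cast
    ring
  simp only [e]
  rw [intervalIntegral.integral_const_mul, int_pow_scaled hρ, Nat.cast_sub (by omega)]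
  push_cast
  have hm' : (1:ℝ) ≤ m := by exact_mod_cast hm
  have h3 : 2 * (2 * (m:ℝ) - 1) + 1 > 0 := by linarith
  rw [div_mul_div_comm, div_le_div_iff₀ (by positivity) hρ]
  have : 16 * (m:ℝ) ^ 2 ≤ 8 * m * (2 * (2 * m - 1) + 1) := by nlinarith
  nlinarith [mul_le_mul_of_nonneg_right this (show 0 ≤ ρ ^ 2 by positivity)]

/-- Two-dimensional cutoff. -/
def chi (ρ : ℝ) (m : ℕ) (x : ℝ × ℝ) : ℝ := eta ρ m x.1 * eta ρ m x.2

lemma chi_contDiff (ρ : ℝ) (m : ℕ) : ContDiff ℝ 1 (chi ρ m) := by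
  unfold chi eta; fun_prop

lemma chi_fderiv (ρ : ℝ) (m : ℕ) (x e : ℝ × ℝ) : fderiv ℝ (chi ρ m) x e =
    deta ρ m x.1 * e.1 * eta ρ m x.2 + eta ρ m x.1 * (deta ρ m x.2 * e.2) := by
  have h1 : HasFDerivAt (fun x : ℝ × ℝ => eta ρ m x.1) _ x :=
    (eta_deriv ρ m x.1).hasFDerivAt.comp x hasFDerivAt_fst
  have h2 : HasFDerivAt (fun x : ℝ × ℝ => eta ρ m x.2) _ x :=
    (eta_deriv ρ m x.2).hasFDerivAt.comp x hasFDerivAt_snd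
  have h3 : fderiv ℝ (chi ρ m) x = _ := (h1.mul h2).fderiv
  rw [h3]
  simp
  ring

lemma int_prod (ρ : ℝ) (f g : ℝ → ℝ) : ∫ x in Qsq ρ, f x.1 * g x.2 =
    (∫ t in Ioo (-ρ/2) (ρ/2), f t) * ∫ t in Ioo (-ρ/2) (ρ/2), g t := by
  rw [Qsq, Measure.volume_eq_prod]
  exact setIntegral_prod_mul f g _ _

lemma chi_frontier {ρ : ℝ} (hρ : 0 < ρ) (m : ℕ) : ∀ x ∈ frontier (Qsq ρ), chi ρ m x = 0 := by
  intro x hx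
  rw [(Qsq_open ρ).frontier_eq, closure_Qsq hρ] at hx
  obtain ⟨⟨⟨h1, h2⟩, h3, h4⟩, h5⟩ := hx
  have hend : ∀ t, -ρ/2 ≤ t → t ≤ ρ/2 → ¬ (-ρ/2 < t ∧ t < ρ/2) → eta ρ m t = 0 := by
    intro t ha hb hc
    rcases eq_or_lt_of_le ha with h | h
    · rw [← h]; exact (eta_end hρ m).2
    · rcases eq_or_lt_of_le hb with h' | h'
      · rw [h']; exact (eta_end hρ m).1
      · exact absurd ⟨h, h'⟩ hc
  by_cases hc : -ρ/2 < x.1 ∧ x.1 < ρ/2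
  · have : ¬ (-ρ/2 < x.2 ∧ x.2 < ρ/2) := fun h => h5 ⟨hc, h⟩
    rw [chi, hend _ h3 h4 this, mul_zero]
  · rw [chi, hend _ h1 h2 hc, zero_mul]

lemma upper_bound {g : ℝ → ℝ} (hg : IsLimitG g) {b r : ℝ} (hb : 0 < b) (hr : 0 < r)
    {m : ℕ} (hm : 1 ≤ m) : eD b r ≤ r ^ 2 * g b + r ^ 2 / m + 32 * b * m := by
  have hm' : (1:ℝ) ≤ m := by exact_mod_cast hm
  set E := ∫ t in Ioo (-r/2) (r/2), eta r m t ^ 2 with hE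
  set D := ∫ t in Ioo (-r/2) (r/2), deta r m t ^ 2 with hD
  have E1 : E ≤ r := int_eta_sq_le hr m
  have E2 : r * (1 - 1 / m) ≤ E := int_eta_sq_ge hr hm
  have D1' : D ≤ 8 * m / r := int_deta_sq hr hm
  have D0 : 0 ≤ D := integral_nonneg fun t => sq_nonneg _
  have E0 : 0 ≤ E := integral_nonneg fun t => sq_nonneg _
  have hp : ∫ x in Qsq r, chi r m x * fderiv ℝ (chi r m) x (1, 0) = 0 := by
    have : ∀ x, chi r m x * fderiv ℝ (chi r m) x (1, 0) =
        (eta r m x.1 * deta r m x.1) * (eta r m x.2 ^ 2) := by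
      intro x; rw [chi_fderiv, chi]; simp; ring
    simp only [this]
    rw [int_prod r (fun t => eta r m t * deta r m t) (fun t => eta r m t ^ 2), int_eta_deta hr,
      zero_mul]
  have hq : ∫ x in Qsq r, chi r m x * fderiv ℝ (chi r m) x (0, 1) = 0 := by
    have : ∀ x, chi r m x * fderiv ℝ (chi r m) x (0, 1) =
        (eta r m x.1 ^ 2) * (eta r m x.2 * deta r m x.2) := by
      intro x; rw [chi_fderiv, chi]; simp; ring
    simp only [this]
    rw [int_prod r (fun t => eta r m t ^ 2) (fun t => eta r m t * deta r m t), int_eta_deta hr,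
      mul_zero]
  have hI : ∫ x in Qsq r, chi r m x ^ 2 = E * E := by
    have : ∀ x, chi r m x ^ 2 = eta r m x.1 ^ 2 * eta r m x.2 ^ 2 := by
      intro x; rw [chi]; ring
    simp only [this]
    rw [int_prod r (fun t => eta r m t ^ 2) (fun t => eta r m t ^ 2)]
  have hG : ∫ x in Qsq r, (fderiv ℝ (chi r m) x (1, 0) ^ 2 + fderiv ℝ (chi r m) x (0, 1) ^ 2)
      = 2 * (D * E) := by
    have : ∀ x, fderiv ℝ (chi r m) x (1, 0) ^ 2 + fderiv ℝ (chi r m) x (0, 1) ^ 2 =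
        deta r m x.1 ^ 2 * eta r m x.2 ^ 2 + eta r m x.1 ^ 2 * deta r m x.2 ^ 2 := by
      intro x; rw [chi_fderiv, chi_fderiv]; simp; ring
    simp only [this]
    have c1 := eta_cont r m
    have c2 := deta_cont r m
    rw [integral_add (int_Q r (by fun_prop)) (int_Q r (by fun_prop)),
      int_prod r (fun t => deta r m t ^ 2) (fun t => eta r m t ^ 2),
      int_prod r (fun t => eta r m t ^ 2) (fun t => deta r m t ^ 2)]
    ring
  have h01 : ∀ x ∈ Qsq r, 0 ≤ chi r m x ∧ chi r m x ≤ 1 := by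
    intro x hx
    have a1 := eta_01 hr m (Ioo_subset_Icc_self hx.1)
    have a2 := eta_01 hr m (Ioo_subset_Icc_self hx.2)
    exact ⟨mul_nonneg a1.1 a2.1, mul_le_one₀ a1.2 a2.1 a2.2⟩
  have DE : D * E ≤ 8 * m := by
    calc D * E ≤ (8 * m / r) * r := mul_le_mul D1' E1 E0 (by positivity)
      _ = 8 * m := by field_simp
  have DE0 : 0 ≤ D * E := mul_nonneg D0 E0
  set S := E * E + b * (2 * (D * E)) with hS
  have hS0 : 0 ≤ S := by positivity
  -- finite-volume inequality, with a slightly enlarged (positive) coefficient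
  have hfin : ∀ δ > 0, ∀ R > 0, eD b r * (R + r) ^ 2 ≤
      (S + δ) * eD b R + (b * (2 * (D * E)) * 2 + δ) * R ^ 2 := by
    intro δ hδ R hR
    refine le_eD hb hR (by linarith) fun w hw => ?_
    have h := sliding hb hr hR (chi_contDiff r m) (chi_frontier hr m) h01 hp hq hw
    rw [hI, hG] at h
    have h2 := Fsq_lower hb hR.le hw.1
    nlinarith [sq_nonneg R]
  have hlim : ∀ δ > 0, eD b r ≤ (S + δ) * g b + (b * (2 * (D * E)) * 2 + δ) := by
    intro δ hδ
    have t1 : Tendsto (fun R : ℝ => eD b r * (1 + r / R) ^ 2) atTop (𝓝 (eD b r * (1 + 0) ^ 2)) :=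
      ((tendsto_const_nhds.add (tendsto_const_nhds.div_atTop tendsto_id)).pow 2).const_mul _
    have t2 := ((hg b hb).const_mul (S + δ)).add_const (b * (2 * (D * E)) * 2 + δ)
    have := le_of_tendsto_of_tendsto t1 t2 ?_
    · simpa using this
    · filter_upwards [eventually_gt_atTop 0] with R hR
      have h := hfin δ hδ R hR
      have e1 : eD b r * (1 + r / R) ^ 2 = (eD b r * (R + r) ^ 2) / R ^ 2 := by field_simp
      have e2 : (S + δ) * (eD b R / R ^ 2) + (b * (2 * (D * E)) * 2 + δ) =
        ((S + δ) * eD b R + (b * (2 * (D * E)) * 2 + δ) * R ^ 2) / R ^ 2 := by field_simp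
      rw [e1, e2]
      exact div_le_div_of_nonneg_right h (by positivity)
  have hg0 : g b ≤ 0 := by
    refine le_of_tendsto (hg b hb) ?_
    filter_upwards [eventually_gt_atTop 0] with R hR
    exact div_nonpos_of_nonpos_of_nonneg (eD_nonpos hb hR.le) (by positivity)
  have hg1 : -(1/2) ≤ g b := by
    refine ge_of_tendsto (hg b hb) ?_
    filter_upwards [eventually_gt_atTop 0] with R hR
    rw [le_div_iff₀ (by positivity)]
    linarith [eD_lower hb hR.le]
  have hfinal : eD b r ≤ S * g b + b * (2 * (D * E)) * 2 := by
    refine le_of_forall_pos_le_add fun δ hδ => ?_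
    have h := hlim δ hδ
    have := mul_nonpos_of_nonneg_of_nonpos hδ.le hg0
    linarith
  -- conclude
  have hEE : r ^ 2 * (1 - 2 / m) ≤ E * E := by
    have hi : (1:ℝ) / m ≤ 1 := by rw [div_le_one (by linarith)]; exact hm'
    have h0 : 0 ≤ r * (1 - 1 / m) := mul_nonneg hr.le (by linarith)
    have h1 := mul_le_mul E2 E2 h0 E0
    have h2 : (2:ℝ) / m = 2 * (1 / m) := by ring
    rw [h2]
    nlinarith [mul_nonneg (sq_nonneg r) (sq_nonneg ((1:ℝ) / m))]
  have hSl : r ^ 2 * (1 - 2 / m) ≤ S := by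
    have : 0 ≤ b * (2 * (D * E)) := by positivity
    linarith
  have k1 := mul_le_mul_of_nonpos_right hSl hg0
  have k2 : r ^ 2 * (1 - 2 / m) * g b ≤ r ^ 2 * g b + r ^ 2 / m := by
    have : r ^ 2 / m * (-(1/2)) ≤ r ^ 2 / m * g b :=
      mul_le_mul_of_nonneg_left hg1 (by positivity)
    have e : r ^ 2 * (1 - 2 / m) * g b = r ^ 2 * g b - 2 * (r ^ 2 / m * g b) := by ring
    rw [e]; linarith
  have k3 := mul_le_mul_of_nonneg_left DE hb.le
  linarith

lemma g_lower {g : ℝ → ℝ} (hg : IsLimitG g) {b : ℝ} (hb : 0 < b) : -(1/2) ≤ g b := by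
  refine ge_of_tendsto (hg b hb) ?_
  filter_upwards [eventually_gt_atTop 0] with R hR
  rw [le_div_iff₀ (by positivity)]
  linarith [eD_lower hb hR.le]

/-- `g(b) ≤ e_D(b,r)/r² ≤ g(b) + C √b / r` for all `r ≥ 1`, `b > 0`. -/
theorem eD_estimate (g : ℝ → ℝ) (hg : IsLimitG g) :
    ∃ C > (0:ℝ), ∀ r : ℝ, 1 ≤ r → ∀ b : ℝ, 0 < b →
      g b ≤ eD b r / r ^ 2 ∧ eD b r / r ^ 2 ≤ g b + C * Real.sqrt b / r := by
  refine ⟨65, by norm_num, fun r hr b hb => ?_⟩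
  have hr0 : 0 < r := by linarith
  refine ⟨lower_bound hg hb hr0, ?_⟩
  have hs : 0 < Real.sqrt b := Real.sqrt_pos.2 hb
  rcases le_total r (Real.sqrt b) with h | h
  · have h1 : eD b r / r ^ 2 ≤ 0 :=
      div_nonpos_of_nonpos_of_nonneg (eD_nonpos hb hr0.le) (by positivity)
    have h2 : 65 ≤ 65 * Real.sqrt b / r := by
      rw [le_div_iff₀ hr0]; linarith
    linarith [g_lower hg hb]
  · have hq : 1 ≤ r / Real.sqrt b := by rwa [le_div_iff₀ hs, one_mul]
    have hm1 : 1 ≤ ⌈r / Real.sqrt b⌉₊ := Nat.one_le_ceil_iff.2 (by linarith)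
    have hml : r / Real.sqrt b ≤ (⌈r / Real.sqrt b⌉₊ : ℝ) := Nat.le_ceil _
    have hmu : (⌈r / Real.sqrt b⌉₊ : ℝ) ≤ 2 * (r / Real.sqrt b) := by
      have := Nat.ceil_lt_add_one (show 0 ≤ r / Real.sqrt b by positivity)
      linarith
    have hub := upper_bound hg hb hr0 hm1
    have k1 : r ^ 2 / (⌈r / Real.sqrt b⌉₊ : ℝ) ≤ r * Real.sqrt b := by
      calc r ^ 2 / (⌈r / Real.sqrt b⌉₊ : ℝ) ≤ r ^ 2 / (r / Real.sqrt b) :=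
            div_le_div_of_nonneg_left (by positivity) (by positivity) hml
        _ = r * Real.sqrt b := by field_simp
    have k2 : 32 * b * (⌈r / Real.sqrt b⌉₊ : ℝ) ≤ 64 * (r * Real.sqrt b) := by
      calc 32 * b * (⌈r / Real.sqrt b⌉₊ : ℝ) ≤ 32 * b * (2 * (r / Real.sqrt b)) :=
            mul_le_mul_of_nonneg_left hmu (by positivity)
        _ = 64 * r * (b / Real.sqrt b) := by ring
        _ = 64 * (r * Real.sqrt b) := by rw [Real.div_sqrt]; ring
    have e : g b + 65 * Real.sqrt b / r = (r ^ 2 * g b + 65 * (r * Real.sqrt b)) / r ^ 2 := by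
      field_simp
    rw [e]
    exact div_le_div_of_nonneg_right (by linarith) (by positivity)

end
end

section
/- There exists a constant C>0 such that, for all L>0 and R>0, any minimizer φ of e_gs(L;R) satisfies ∫_{S_R} |φ(x)|² dx ≤ C L^{-2/3} R. -/
open MeasureTheory Real Set Filter Topology

noncomputable section

/-- The bounded odd weight `w(x) = x / √(1+x²)`. -/
def wgt (x : ℝ) : ℝ := x / √(1 + x ^ 2)

lemma wgt_facts (x : ℝ) : ∃ s : ℝ, s = √(1 + x ^ 2) ∧ 1 ≤ s ∧ s ^ 2 = 1 + x ^ 2 ∧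
    HasDerivAt wgt (1 / s ^ 3) x := by
  have h0 : (0:ℝ) < 1 + x ^ 2 := by positivity
  have hs : (√(1 + x ^ 2)) ^ 2 = 1 + x ^ 2 := Real.sq_sqrt h0.le
  have hs1 : 1 ≤ √(1 + x ^ 2) := by
    rw [Real.one_le_sqrt]; nlinarith [sq_nonneg x]
  refine ⟨_, rfl, hs1, hs, ?_⟩
  have h1 : HasDerivAt (fun y : ℝ => 1 + y ^ 2) (2 * x) x := by
    simpa using ((hasDerivAt_id x).pow 2).const_add 1
  have h2 := h1.sqrt h0.ne'
  have h3 := (hasDerivAt_id x).div h2 (by positivity)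
  refine h3.congr_deriv ?_
  simp only [id]
  set s := √(1 + x ^ 2)
  have : x ^ 2 = s ^ 2 - 1 := by linarith
  have hs0 : s ≠ 0 := by positivity
  field_simp
  rw [this]; ring

lemma wgt_abs (x : ℝ) : |wgt x| ≤ 1 := by
  obtain ⟨s, hs, h1, h2, -⟩ := wgt_facts x
  rw [wgt, ← hs, abs_div, div_le_one (by positivity), abs_of_pos (by linarith : 0 < s)]
  exact abs_le_of_sq_le_sq (by linarith) (by linarith)

lemma pointwise (x s w a p q m : ℝ) (hs : 1 ≤ s) (hs2 : s ^ 2 = 1 + x ^ 2) (hw : w = x / s)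
    (hm : |m| ≤ p * q) :
    |x| * p ^ 2 ≤ 16 * (q ^ 2 + a ^ 2 * p ^ 2) +
      8 * ((1 / s ^ 3 * (a + 1 / 2) + w * x) * p ^ 2 + w * (a + 1 / 2) * (2 * m)) := by
  have hs0 : 0 < s := by linarith
  set d := 1 / s ^ 3 with hd
  have hd0 : 0 ≤ d := by positivity
  have hd1 : d ≤ 1 := by
    rw [hd, div_le_one (by positivity)]
    exact one_le_pow₀ hs
  have hww : w ^ 2 ≤ w * x := by
    rw [hw, div_pow, div_mul_eq_mul_div, div_le_div_iff₀ (by positivity) hs0]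
    nlinarith [mul_nonneg (sq_nonneg x) (mul_nonneg hs0.le (sub_nonneg.2 hs))]
  have hw1 : w ^ 2 ≤ 1 := by
    rw [hw, div_pow, div_le_one (by positivity)]; linarith
  have hx : |x| ≤ s := abs_le_of_sq_le_sq (by linarith) (by linarith)
  have hkey : s / 2 ≤ w * x + d := by
    rw [hw, hd, div_mul_eq_mul_div, div_add_div _ _ hs0.ne' (by positivity),
      div_le_div_iff₀ (by norm_num) (by positivity)]
    have : x * x = s ^ 2 - 1 := by linarith
    rw [this]
    nlinarith [mul_nonneg hs0.le (sq_nonneg (s ^ 2 - 1)), hs0]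
  -- cross terms
  have c1 : -(q ^ 2 + a ^ 2 * p ^ 2) ≤ w * a * (2 * m) := by
    have h1 : m ^ 2 ≤ (p * q) ^ 2 := by
      rw [← sq_abs m]; gcongr
    have : |w * a * (2 * m)| ≤ q ^ 2 + a ^ 2 * p ^ 2 := by
      apply abs_le_of_sq_le_sq _ (by positivity)
      have h2 : w ^ 2 * (a ^ 2 * m ^ 2) ≤ 1 * (a ^ 2 * (p * q) ^ 2) := by gcongr
      nlinarith [sq_nonneg (q ^ 2 - a ^ 2 * p ^ 2)]
    linarith [(abs_le.1 this).1]
  have c2 : -(q ^ 2 / 2 + w ^ 2 * p ^ 2 / 2) ≤ w * m := by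
    have h1 : m ^ 2 ≤ (p * q) ^ 2 := by
      rw [← sq_abs m]; gcongr
    have : |w * m| ≤ q ^ 2 / 2 + w ^ 2 * p ^ 2 / 2 := by
      apply abs_le_of_sq_le_sq _ (by positivity)
      have h2 : w ^ 2 * m ^ 2 ≤ w ^ 2 * (p * q) ^ 2 := by gcongr
      nlinarith [sq_nonneg (q ^ 2 - w ^ 2 * p ^ 2)]
    linarith [(abs_le.1 this).1]
  have c3 : -(d / 4 + a ^ 2) ≤ d * a := by
    nlinarith [mul_nonneg hd0 (sq_nonneg (a + 1 / 2)), mul_nonneg (sub_nonneg.2 hd1) (sq_nonneg a)]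
  have c3p := mul_le_mul_of_nonneg_right c3 (sq_nonneg p)
  have c4 : |x| ≤ 8 * (d / 4 + w * x - w ^ 2 / 2) := by nlinarith [sq_nonneg w]
  have c4p := mul_le_mul_of_nonneg_right c4 (sq_nonneg p)
  nlinarith [sq_nonneg q]

lemma pointwise_bd (k x s w p q m : ℝ) (hs : 1 ≤ s) (hw : |w| ≤ 1)
    (_hp : 0 ≤ p) (_hq : 0 ≤ q) (hm : |m| ≤ p * q) :
    |(1 / s ^ 3 * ((k + x ^ 2 / 2) + 1 / 2) + w * x) * p ^ 2
        + w * ((k + x ^ 2 / 2) + 1 / 2) * (2 * m)|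
      ≤ (10 + 10 * |k|) * (p ^ 2 + (q ^ 2 + (k + x ^ 2 / 2) ^ 2 * p ^ 2)) := by
  set a := k + x ^ 2 / 2 with ha
  set d := 1 / s ^ 3 with hd
  have hd0 : 0 ≤ d := by positivity
  have hd1 : d ≤ 1 := by
    rw [hd, div_le_one (by positivity)]
    exact one_le_pow₀ hs
  have hx : |x| ≤ 1 + 2 * |a| + 2 * |k| := by
    have : x ^ 2 = 2 * (a - k) := by rw [ha]; ring
    have h2 := abs_sub a k
    nlinarith [sq_abs x, sq_nonneg (|x| - 1), le_abs_self (a - k), abs_nonneg a, abs_nonneg k]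
  have hA := abs_nonneg a
  have hK := abs_nonneg k
  have ha2 : |a| ^ 2 = a ^ 2 := sq_abs a
  calc _ ≤ (d * (|a| + 1 / 2) + |w| * |x|) * p ^ 2 + |w| * (|a| + 1 / 2) * (2 * |m|) := by
        refine (abs_add_le _ _).trans ?_
        rw [abs_mul, abs_mul, abs_mul, abs_of_nonneg (sq_nonneg p), abs_mul 2 m, abs_two]
        have e1 : |a + 1 / 2| ≤ |a| + 1 / 2 := by
          refine (abs_add_le _ _).trans (le_of_eq ?_); norm_num
        gcongr
        refine (abs_add_le _ _).trans ?_
        rw [abs_mul, abs_mul, abs_of_nonneg hd0]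
        gcongr
    _ ≤ (1 * (|a| + 1 / 2) + 1 * (1 + 2 * |a| + 2 * |k|)) * p ^ 2
          + 1 * (|a| + 1 / 2) * (2 * (p * q)) := by gcongr
    _ ≤ _ := by
        rw [← ha2]
        have e1 : 0 ≤ (|a| * p - q) ^ 2 := sq_nonneg _
        have e2 : 0 ≤ (p - q) ^ 2 := sq_nonneg _
        have e3 : 0 ≤ (|a| - 1) ^ 2 * p ^ 2 := by positivity
        have e4 : 0 ≤ |k| * q ^ 2 := by positivity
        have e5 : 0 ≤ |k| * (|a| ^ 2 * p ^ 2) := by positivity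
        have e6 : 0 ≤ |k| * p ^ 2 := by positivity
        have e7 : 0 ≤ |a| ^ 2 * p ^ 2 := by positivity
        nlinarith [sq_nonneg p, sq_nonneg q]

lemma oned (v v' : ℝ → ℂ) (hv : ∀ x, HasDerivAt v (v' x) x) (hc : Continuous v') (k : ℝ)
    (h0 : Integrable fun x => ‖v x‖ ^ 2) :
    ∫⁻ x, ENNReal.ofReal (|x| * ‖v x‖ ^ 2) ≤
      16 * ∫⁻ x, ENNReal.ofReal (‖v' x‖ ^ 2 + (k + x ^ 2 / 2) ^ 2 * ‖v x‖ ^ 2) := by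
  have hcv : Continuous v := continuous_iff_continuousAt.2 fun x => (hv x).continuousAt
  set F : ℝ → ℝ := fun x => ‖v' x‖ ^ 2 + (k + x ^ 2 / 2) ^ 2 * ‖v x‖ ^ 2 with hF
  have hFc : Continuous F := by fun_prop
  have hF0 : ∀ x, 0 ≤ F x := fun x => by positivity
  by_cases hFi : Integrable F
  swap
  · have : ∫⁻ x, ENNReal.ofReal (F x) = ⊤ := by
      by_contra hne
      apply hFi
      refine ⟨hFc.aestronglyMeasurable, ?_⟩
      rw [hasFiniteIntegral_iff_ofReal (ae_of_all _ hF0)]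
      exact lt_top_iff_ne_top.2 hne
    rw [this]; simp
  have hwc : Continuous wgt := continuous_iff_continuousAt.2 fun x => by
    obtain ⟨s, -, -, -, h⟩ := wgt_facts x
    exact h.continuousAt
  set g : ℝ → ℝ := fun x => wgt x * ((k + x ^ 2 / 2) + 1 / 2) * ‖v x‖ ^ 2 with hg
  set g' : ℝ → ℝ := fun x => (1 / (√(1 + x ^ 2)) ^ 3 * ((k + x ^ 2 / 2) + 1 / 2) + wgt x * x)
    * ‖v x‖ ^ 2 + wgt x * ((k + x ^ 2 / 2) + 1 / 2) * (2 * inner ℝ (v x) (v' x)) with hg'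
  have hgd : ∀ x, HasDerivAt g (g' x) x := by
    intro x
    obtain ⟨s, hs, -, -, h⟩ := wgt_facts x
    have h1 : HasDerivAt (fun y : ℝ => (k + y ^ 2 / 2) + 1 / 2) x x := by
      have := ((((hasDerivAt_id x).pow 2).div_const 2).const_add k).add_const (1 / 2)
      refine this.congr_deriv ?_
      simp
    have h2 := (h.mul h1).mul (hv x).norm_sq
    rw [hs] at h2
    exact h2
  have hsum : Integrable fun x => (10 + 10 * |k|) * (‖v x‖ ^ 2 + F x) := (h0.add hFi).const_mul _
  have hg'c : Continuous g' := by
    have : Continuous fun x : ℝ => (1 / (√(1 + x ^ 2)) ^ 3) := by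
      refine continuous_const.div (by fun_prop) fun x => ?_
      have : 0 < √(1 + x ^ 2) := by positivity
      positivity
    have h2 : Continuous fun x : ℝ => inner ℝ (v x) (v' x) := hcv.inner hc
    fun_prop
  have hg'i : Integrable g' := by
    refine hsum.mono' hg'c.aestronglyMeasurable (ae_of_all _ fun x => ?_)
    obtain ⟨s, hs, h1, h2, h⟩ := wgt_facts x
    rw [Real.norm_eq_abs]
    simp only [hg', ← hs]
    exact pointwise_bd k x s (wgt x) ‖v x‖ ‖v' x‖ _ h1 (wgt_abs x) (norm_nonneg _) (norm_nonneg _)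
      (abs_real_inner_le_norm _ _)
  have hgi : Integrable g := by
    refine hsum.mono' (by fun_prop) (ae_of_all _ fun x => ?_)
    rw [Real.norm_eq_abs, hg, abs_mul, abs_mul, abs_of_nonneg (sq_nonneg ‖v x‖)]
    have e1 : |(k + x ^ 2 / 2) + 1 / 2| ≤ 1 + (k + x ^ 2 / 2) ^ 2 := by
      rw [abs_le]; constructor <;> nlinarith [sq_nonneg ((k + x ^ 2 / 2) - 1 / 2),
        sq_nonneg ((k + x ^ 2 / 2) + 1 / 2)]
    have e2 : |wgt x| * |(k + x ^ 2 / 2) + 1 / 2| * ‖v x‖ ^ 2 ≤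
        1 * (1 + (k + x ^ 2 / 2) ^ 2) * ‖v x‖ ^ 2 := by
      gcongr; exact wgt_abs x
    refine e2.trans ?_
    simp only [hF]
    have : 0 ≤ |k| * (‖v x‖ ^ 2 + F x) := by have := hF0 x; positivity
    simp only [hF] at this
    have e3 : 0 ≤ (k + x ^ 2 / 2) ^ 2 * ‖v x‖ ^ 2 := by positivity
    nlinarith [sq_nonneg ‖v x‖, sq_nonneg ‖v' x‖]
  have hz := integral_eq_zero_of_hasDerivAt_of_integrable hgd hg'i hgi
  have hpt : ∀ x, |x| * ‖v x‖ ^ 2 ≤ 16 * F x + 8 * g' x := by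
    intro x
    obtain ⟨s, hs, h1, h2, h⟩ := wgt_facts x
    have := pointwise x s (wgt x) (k + x ^ 2 / 2) ‖v x‖ ‖v' x‖ _ h1 h2 (by rw [wgt, hs])
      (abs_real_inner_le_norm (v x) (v' x))
    simp only [hg', hF, ← hs]
    exact this
  have hR : Integrable fun x => 16 * F x + 8 * g' x := (hFi.const_mul 16).add (hg'i.const_mul 8)
  calc _ ≤ ∫⁻ x, ENNReal.ofReal (16 * F x + 8 * g' x) :=
        lintegral_mono fun x => ENNReal.ofReal_le_ofReal (hpt x)
    _ = ENNReal.ofReal (∫ x, (16 * F x + 8 * g' x)) :=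
        (ofReal_integral_eq_lintegral_ofReal hR
          (ae_of_all _ fun x => le_trans (by positivity) (hpt x))).symm
    _ = ENNReal.ofReal (16 * ∫ x, F x) := by
        rw [integral_add (hFi.const_mul 16) (hg'i.const_mul 8), integral_const_mul,
          integral_const_mul, hz]; simp
    _ = 16 * ∫⁻ x, ENNReal.ofReal (F x) := by
        rw [ENNReal.ofReal_mul (by norm_num), ofReal_integral_eq_lintegral_ofReal hFi
          (ae_of_all _ hF0)]
        norm_num

lemma half_lt {R : ℝ} (hR : 0 < R) : -R / 2 < R / 2 := by linarith

/-- Fourier coefficients in `x₁` of the slice at height `y`. -/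
def fc {R : ℝ} (hR : 0 < R) (H : ℝ × ℝ → ℂ) (n : ℤ) (y : ℝ) : ℂ :=
  fourierCoeffOn (half_lt hR) (fun x => H (x, y)) n

lemma fc_eq {R : ℝ} (hR : 0 < R) (H : ℝ × ℝ → ℂ) (n : ℤ) (y : ℝ) :
    fc hR H n y = (1 / (R / 2 - -R / 2)) •
      ∫ x in (-R / 2)..(R / 2), fourier (-n) (x : AddCircle (R / 2 - -R / 2)) • H (x, y) :=
  fourierCoeffOn_eq_integral _ _ _

lemma fc_eq' {R : ℝ} (hR : 0 < R) (H : ℝ × ℝ → ℂ) (n : ℤ) :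
    fc hR H n = fun y => (1 / (R / 2 - -R / 2)) •
      ∫ x in (-R / 2)..(R / 2), fourier (-n) (x : AddCircle (R / 2 - -R / 2)) • H (x, y) :=
  funext fun y => fc_eq hR H n y

lemma fc_continuous {R : ℝ} (hR : 0 < R) (H : ℝ × ℝ → ℂ) (hH : Continuous H) (n : ℤ) :
    Continuous (fc hR H n) := by
  rw [fc_eq' hR H n]
  apply Continuous.fun_const_smul
  apply intervalIntegral.continuous_parametric_intervalIntegral_of_continuous'
  have h1 : Continuous fun x : ℝ => fourier (-n) (x : AddCircle (R / 2 - -R / 2)) :=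
    (map_continuous (fourier (-n))).comp (AddCircle.continuous_mk' _)
  have h2 := h1.comp (continuous_snd : Continuous (Prod.snd : ℝ × ℝ → ℝ))
  exact h2.smul (hH.comp continuous_swap)

lemma fc_parseval {R : ℝ} (hR : 0 < R) (H : ℝ × ℝ → ℂ) (hH : Continuous H) (y : ℝ) :
    ∫⁻ x in Ioo (-R / 2) (R / 2), ENNReal.ofReal (‖H (x, y)‖ ^ 2) =
      ENNReal.ofReal R * ∑' n : ℤ, ENNReal.ofReal (‖fc hR H n y‖ ^ 2) := by
  have hc : Continuous fun x => H (x, y) := by fun_prop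
  have hL : MemLp (fun x => H (x, y)) 2 (volume.restrict (Ioc (-R / 2) (R / 2))) := by
    rw [memLp_two_iff_integrable_sq_norm hc.aestronglyMeasurable]
    have : Continuous fun x => ‖H (x, y)‖ ^ 2 := by fun_prop
    exact (this.integrableOn_Icc (a := -R / 2) (b := R / 2)).mono_set Ioc_subset_Icc_self
  have hs := hasSum_sq_fourierCoeffOn (half_lt hR) hL
  simp only [fc]
  rw [← ENNReal.ofReal_tsum_of_nonneg (fun n => by positivity) hs.summable]
  rw [hs.tsum_eq, ← ENNReal.ofReal_mul hR.le, smul_eq_mul,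
    intervalIntegral.integral_of_le (half_lt hR).le, ← integral_Ioc_eq_integral_Ioo.symm,
    ← ofReal_integral_eq_lintegral_ofReal]
  · congr 1
    have : R / 2 - -R / 2 = R := by ring
    rw [this, mul_inv_cancel_left₀ hR.ne']
  · have : Continuous fun x => ‖H (x, y)‖ ^ 2 := by fun_prop
    exact (this.integrableOn_Icc (a := -R / 2) (b := R / 2)).mono_set Ioo_subset_Icc_self
  · exact ae_of_all _ fun x => by positivity

lemma strip_measure (R : ℝ) : (volume : Measure (ℝ × ℝ)).restrict (Strip R) =
    (volume.restrict (Ioo (-R / 2) (R / 2))).prod volume := by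
  rw [Strip, Measure.volume_eq_prod, ← Measure.prod_restrict, Measure.restrict_univ]

lemma strip_parseval {R : ℝ} (hR : 0 < R) (H : ℝ × ℝ → ℂ) (hH : Continuous H)
    (c : ℝ → ℝ) (hc : Continuous c) (hc0 : ∀ y, 0 ≤ c y) :
    ∫⁻ z in Strip R, ENNReal.ofReal (c z.2 * ‖H z‖ ^ 2) =
      ENNReal.ofReal R * ∑' n : ℤ, ∫⁻ y, ENNReal.ofReal (c y * ‖fc hR H n y‖ ^ 2) := by
  have hm : Measurable fun z : ℝ × ℝ => ENNReal.ofReal (c z.2 * ‖H z‖ ^ 2) := by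
    refine ENNReal.measurable_ofReal.comp (Continuous.measurable ?_)
    fun_prop
  have hcf := fun n => fc_continuous hR H hH n
  have hm2 : ∀ n : ℤ, Measurable fun y : ℝ => ENNReal.ofReal (c y * ‖fc hR H n y‖ ^ 2) := by
    intro n
    have := hcf n
    refine ENNReal.measurable_ofReal.comp (Continuous.measurable ?_)
    fun_prop
  rw [strip_measure, lintegral_prod_symm _ hm.aemeasurable,
    ← lintegral_tsum fun n => (hm2 n).aemeasurable,
    ← lintegral_const_mul _ (Measurable.tsum hm2)]
  refine lintegral_congr fun y => ?_
  simp only [ENNReal.ofReal_mul (hc0 y)]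
  rw [lintegral_const_mul', fc_parseval hR H hH, ENNReal.tsum_mul_left]
  · ring
  · exact ENNReal.ofReal_ne_top

lemma fc_deriv2 {R : ℝ} (hR : 0 < R) (u : ℝ × ℝ → ℂ) (hu : ContDiff ℝ 1 u) (n : ℤ) (y : ℝ) :
    HasDerivAt (fc hR u n) (fc hR (fun z => fderiv ℝ u z (0, 1)) n y) y := by
  rw [fc_eq' hR u n, fc_eq]
  refine HasDerivAt.fun_const_smul (1 / (R / 2 - -R / 2)) ?_
  have h1 : Continuous fun x : ℝ => fourier (-n) (x : AddCircle (R / 2 - -R / 2)) :=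
    (map_continuous (fourier (-n))).comp (AddCircle.continuous_mk' _)
  have hd : Continuous fun z => fderiv ℝ u z (0, 1) :=
    (hu.continuous_fderiv one_ne_zero).clm_apply continuous_const
  have huc := hu.continuous
  obtain ⟨C, hC⟩ := ((isCompact_Icc (a := -R / 2) (b := R / 2)).prod
    (isCompact_Icc (a := y - 1) (b := y + 1))).exists_bound_of_continuousOn
      (f := fun z : ℝ × ℝ => fourier (-n) (z.1 : AddCircle (R / 2 - -R / 2)) •
        fderiv ℝ u z (0, 1))
      ((h1.comp continuous_fst).smul hd).continuousOn
  refine (intervalIntegral.hasDerivAt_integral_of_dominated_loc_of_deriv_le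
    (F := fun y x => fourier (-n) (x : AddCircle (R / 2 - -R / 2)) • u (x, y))
    (F' := fun y x => fourier (-n) (x : AddCircle (R / 2 - -R / 2)) • fderiv ℝ u (x, y) (0, 1))
    (s := Icc (y - 1) (y + 1)) (bound := fun _ => C)
    (Icc_mem_nhds (by linarith) (by linarith)) ?_ ?_ ?_ ?_ ?_ ?_).2
  · refine Eventually.of_forall fun y => ?_
    exact (h1.smul (huc.comp (by fun_prop))).aestronglyMeasurable
  · exact (h1.smul (huc.comp (by fun_prop))).intervalIntegrable _ _
  · exact (h1.smul (hd.comp (by fun_prop))).aestronglyMeasurable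
  · refine ae_of_all _ fun x hx t ht => ?_
    rw [uIoc_of_le (half_lt hR).le] at hx
    exact hC (x, t) ⟨Ioc_subset_Icc_self hx, ht⟩
  · exact intervalIntegrable_const
  · refine ae_of_all _ fun x hx t ht => ?_
    refine HasDerivAt.fun_const_smul (fourier (-n) (x : AddCircle (R / 2 - -R / 2))) ?_
    have h2 : HasDerivAt (fun t : ℝ => (x, t)) ((0 : ℝ), (1 : ℝ)) t :=
      (hasDerivAt_const t x).prodMk (hasDerivAt_id t)
    exact ((hu.differentiable one_ne_zero) (x, t)).hasFDerivAt.comp_hasDerivAt t h2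

lemma fc_deriv1 {R : ℝ} (hR : 0 < R) (u : ℝ × ℝ → ℂ) (hu : ContDiff ℝ 1 u) (n : ℤ) (y : ℝ)
    (hb : u (-R / 2, y) = 0) (hb' : u (R / 2, y) = 0) :
    fc hR (fun z => fderiv ℝ u z (1, 0)) n y =
      Complex.I * ((2 * π * n / R : ℝ) : ℂ) * fc hR u n y := by
  have hd : Continuous fun z => fderiv ℝ u z (1, 0) :=
    (hu.continuous_fderiv one_ne_zero).clm_apply continuous_const
  have hder : ∀ x, HasDerivAt (fun x => u (x, y)) (fderiv ℝ u (x, y) (1, 0)) x := by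
    intro x
    have h2 : HasDerivAt (fun t : ℝ => (t, y)) ((1 : ℝ), (0 : ℝ)) x :=
      (hasDerivAt_id x).prodMk (hasDerivAt_const x y)
    exact ((hu.differentiable one_ne_zero) (x, y)).hasFDerivAt.comp_hasDerivAt x h2
  have hi : IntervalIntegrable (fun x => fderiv ℝ u (x, y) (1, 0)) volume (-R / 2) (R / 2) :=
    (hd.comp (by fun_prop : Continuous fun x : ℝ => (x, y))).intervalIntegrable _ _
  by_cases hn : n = 0
  · subst hn
    rw [fc_eq]
    simp only [neg_zero, fourier_zero, one_smul]
    rw [intervalIntegral.integral_eq_sub_of_hasDerivAt (fun x _ => hder x) hi, hb, hb']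
    simp
  · have := fourierCoeffOn_of_hasDerivAt (half_lt hR) hn (fun x _ => hder x) hi
    simp only [fc]
    rw [this, hb, hb']
    have hn' : (n : ℂ) ≠ 0 := by exact_mod_cast hn
    have hR' : (R : ℂ) ≠ 0 := by exact_mod_cast hR.ne'
    have hpi : (π : ℂ) ≠ 0 := by exact_mod_cast Real.pi_ne_zero
    have hI := Complex.I_ne_zero
    push_cast
    field_simp
    ring

lemma fc_add_mul {R : ℝ} (hR : 0 < R) (F G : ℝ × ℝ → ℂ) (hF : Continuous F) (hG : Continuous G)
    (c : ℝ → ℂ) (n : ℤ) (y : ℝ) :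
    fc hR (fun z => F z - c z.2 * G z) n y = fc hR F n y - c y * fc hR G n y := by
  have h1 : Continuous fun x : ℝ => fourier (-n) (x : AddCircle (R / 2 - -R / 2)) :=
    (map_continuous (fourier (-n))).comp (AddCircle.continuous_mk' _)
  simp only [fc_eq, smul_eq_mul, mul_sub, mul_left_comm _ (c y)]
  rw [intervalIntegral.integral_sub, intervalIntegral.integral_const_mul, smul_sub]
  · rw [mul_smul_comm]
  · exact (h1.mul (hF.comp (by fun_prop))).intervalIntegrable _ _
  · exact (continuous_const.mul (h1.mul (hG.comp (by fun_prop)))).intervalIntegrable _ _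

lemma mem_frontier_strip {R : ℝ} (hR : 0 < R) (y : ℝ) :
    ((-R / 2, y) : ℝ × ℝ) ∈ frontier (Strip R) ∧ ((R / 2, y) : ℝ × ℝ) ∈ frontier (Strip R) := by
  rw [Strip, frontier_prod_univ_eq, frontier_Ioo (half_lt hR)]
  simp

lemma hardy {R : ℝ} (hR : 0 < R) (u : ℝ × ℝ → ℂ) (hu : ContDiff ℝ 1 u)
    (hL2 : IntegrableOn (fun x => ‖u x‖ ^ 2) (Strip R))
    (hb : ∀ x ∈ frontier (Strip R), u x = 0) :
    ∫⁻ z in Strip R, ENNReal.ofReal (|z.2| * ‖u z‖ ^ 2) ≤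
      16 * ∫⁻ z in Strip R, ENNReal.ofReal (magGradSq Avan u z) := by
  have huc := hu.continuous
  have hd1 : Continuous fun z => fderiv ℝ u z (1, 0) :=
    (hu.continuous_fderiv one_ne_zero).clm_apply continuous_const
  have hd2 : Continuous fun z => fderiv ℝ u z (0, 1) :=
    (hu.continuous_fderiv one_ne_zero).clm_apply continuous_const
  set cc : ℝ → ℂ := fun y => Complex.I * ((-y ^ 2 / 2 : ℝ) : ℂ) with hcc
  have hccc : Continuous cc := by fun_prop
  set D1 : ℝ × ℝ → ℂ := fun z => fderiv ℝ u z (1, 0) - cc z.2 * u z with hD1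
  have hD1c : Continuous D1 := by fun_prop
  set D2 : ℝ × ℝ → ℂ := fun z => fderiv ℝ u z (0, 1) with hD2
  have hmag : ∀ z, magGradSq Avan u z = ‖D2 z‖ ^ 2 + ‖D1 z‖ ^ 2 := by
    intro z
    simp only [magGradSq, Avan, hD1, hD2, hcc]
    simp [add_comm]
  have hD1f : ∀ n y, ‖fc hR D1 n y‖ ^ 2 = (2 * π * n / R + y ^ 2 / 2) ^ 2 * ‖fc hR u n y‖ ^ 2 := by
    intro n y
    rw [hD1, fc_add_mul hR _ _ hd1 huc, fc_deriv1 hR u hu n y (hb _ (mem_frontier_strip hR y).1)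
      (hb _ (mem_frontier_strip hR y).2), ← sub_mul, hcc, ← mul_sub, ← Complex.ofReal_sub,
      norm_mul, norm_mul, Complex.norm_I, one_mul, Complex.norm_real, mul_pow, Real.norm_eq_abs,
      sq_abs]
    congr 2
    ring
  have hv : ∀ n, Integrable fun y => ‖fc hR u n y‖ ^ 2 := by
    intro n
    have hcf := fc_continuous hR u huc n
    refine ⟨by fun_prop, ?_⟩
    rw [hasFiniteIntegral_iff_ofReal (ae_of_all _ fun y => by positivity)]
    have h1 := strip_parseval hR u huc (fun _ => 1) continuous_const (fun _ => zero_le_one)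
    simp only [one_mul] at h1
    have h2 := hL2.2
    rw [hasFiniteIntegral_iff_ofReal (ae_of_all _ fun y => by positivity), h1] at h2
    have h3 := ENNReal.lt_top_of_mul_ne_top_right h2.ne (by simpa using hR)
    exact (ENNReal.le_tsum n).trans_lt h3
  have hsplit : ∫⁻ z in Strip R, ENNReal.ofReal (magGradSq Avan u z) =
      ENNReal.ofReal R * ∑' n : ℤ, ∫⁻ y, ENNReal.ofReal (‖fc hR D2 n y‖ ^ 2 +
        (2 * π * n / R + y ^ 2 / 2) ^ 2 * ‖fc hR u n y‖ ^ 2) := by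
    have h1 := strip_parseval hR D1 hD1c (fun _ => 1) continuous_const (fun _ => zero_le_one)
    have h2 := strip_parseval hR D2 hd2 (fun _ => 1) continuous_const (fun _ => zero_le_one)
    simp only [one_mul] at h1 h2
    have e1 : ∀ z, ENNReal.ofReal (magGradSq Avan u z) =
        ENNReal.ofReal (‖D2 z‖ ^ 2) + ENNReal.ofReal (‖D1 z‖ ^ 2) := fun z => by
      rw [hmag, ENNReal.ofReal_add (by positivity) (by positivity)]
    simp only [e1]
    rw [lintegral_add_left, h1, h2, ← mul_add, ← ENNReal.tsum_add]
    · congr 2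
      ext n
      rw [← lintegral_add_left]
      · refine lintegral_congr fun y => ?_
        rw [ENNReal.ofReal_add (by positivity) (by positivity), hD1f]
      · have := fc_continuous hR D2 hd2 n
        refine ENNReal.measurable_ofReal.comp (Continuous.measurable ?_)
        fun_prop
    · refine ENNReal.measurable_ofReal.comp (Continuous.measurable ?_)
      fun_prop
  rw [strip_parseval hR u huc (fun y => |y|) continuous_abs abs_nonneg, hsplit,
    mul_left_comm 16]
  refine mul_le_mul_right ?_ _
  rw [← ENNReal.tsum_mul_left]
  refine (ENNReal.tsum_le_tsum fun n => ?_)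
  exact oned _ _ (fc_deriv2 hR u hu n) (fc_continuous hR D2 hd2 n) _ (hv n)

lemma final_bound {l R : ℝ} (hl : 0 < l) (hR : 0 < R) (φ : ℝ × ℝ → ℂ) (hφ : MemH1mag0 R φ)
    (hE : ∫ x in Strip R, (magGradSq Avan φ x - l * ‖φ x‖ ^ 2 + (l / 2) * ‖φ x‖ ^ 4) ≤ 0) :
    (∫ x in Strip R, ‖φ x‖ ^ 2) ≤ 512 * l * R := by
  obtain ⟨hu, h2, hG, h4, hb⟩ := hφ
  have huc := hu.continuous
  have hH := hardy hR φ hu h2 hb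
  have hG0 : ∀ z, 0 ≤ magGradSq Avan φ z := fun z => by unfold magGradSq; positivity
  rw [← ofReal_integral_eq_lintegral_ofReal hG (ae_of_all _ hG0)] at hH
  have hXi : IntegrableOn (fun z : ℝ × ℝ => |z.2| * ‖φ z‖ ^ 2) (Strip R) := by
    refine ⟨by apply Continuous.aestronglyMeasurable; fun_prop, ?_⟩
    rw [hasFiniteIntegral_iff_ofReal (ae_of_all _ fun y => by positivity)]
    exact hH.trans_lt (ENNReal.mul_lt_top (by norm_num) ENNReal.ofReal_lt_top)
  rw [← ofReal_integral_eq_lintegral_ofReal hXi (ae_of_all _ fun z => by positivity)] at hH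
  have hH' : ∫ z in Strip R, |z.2| * ‖φ z‖ ^ 2 ≤ 16 * ∫ z in Strip R, magGradSq Avan φ z := by
    have e : (16 : ENNReal) = ENNReal.ofReal 16 := by norm_num
    have h0 : 0 ≤ ∫ z in Strip R, magGradSq Avan φ z := integral_nonneg hG0
    rw [e, ← ENNReal.ofReal_mul (by norm_num), ENNReal.ofReal_le_ofReal_iff (by positivity)] at hH
    exact hH
  have hE' : (∫ z in Strip R, magGradSq Avan φ z) - l * (∫ z in Strip R, ‖φ z‖ ^ 2)
      + l / 2 * (∫ z in Strip R, ‖φ z‖ ^ 4) ≤ 0 := by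
    have hs : IntegrableOn (fun z => magGradSq Avan φ z - l * ‖φ z‖ ^ 2) (Strip R) :=
      hG.sub (h2.const_mul l)
    rw [integral_add hs (h4.const_mul _),
      integral_sub hG (h2.const_mul l), integral_const_mul, integral_const_mul] at hE
    exact hE
  set B : Set (ℝ × ℝ) := Ioo (-R / 2) (R / 2) ×ˢ Ioo (-(32 * l)) (32 * l) with hB
  have hBm : MeasurableSet B := measurableSet_Ioo.prod measurableSet_Ioo
  have hBv : volume B = ENNReal.ofReal (R * (64 * l)) := by
    rw [hB, Measure.volume_eq_prod, Measure.prod_prod, Real.volume_Ioo, Real.volume_Ioo,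
      ENNReal.ofReal_mul hR.le]
    congr 2 <;> ring
  have hBS : B ⊆ Strip R := prod_mono le_rfl (subset_univ _)
  have hIi : IntegrableOn (B.indicator fun _ => (2:ℝ)) (Strip R) := by
    rw [integrableOn_indicator_iff hBm, inter_eq_left.2 hBS]
    refine integrableOn_const ?_
    rw [hBv]; exact ENNReal.ofReal_ne_top
  have hII : ∫ z in Strip R, B.indicator (fun _ => (2:ℝ)) z = 128 * l * R := by
    rw [setIntegral_indicator hBm, inter_eq_right.2 hBS, setIntegral_const, measureReal_def, hBv,
      ENNReal.toReal_ofReal (by positivity)]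
    simp; ring
  have hmain : ∫ z in Strip R, ‖φ z‖ ^ 2 ≤ ∫ z in Strip R, (1 / (32 * l) * (|z.2| * ‖φ z‖ ^ 2)
      + 1 / 8 * ‖φ z‖ ^ 4 + B.indicator (fun _ => (2:ℝ)) z) := by
    have hSm : MeasurableSet (Strip R) := measurableSet_Ioo.prod MeasurableSet.univ
    refine setIntegral_mono_on h2 (((hXi.const_mul _).add (h4.const_mul _)).add hIi) hSm ?_
    intro z hz
    by_cases hzB : z ∈ B
    · rw [indicator_of_mem hzB]
      have : 0 ≤ 1 / (32 * l) * (|z.2| * ‖φ z‖ ^ 2) := by positivity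
      nlinarith [sq_nonneg (‖φ z‖ ^ 2 - 4)]
    · rw [indicator_of_notMem hzB]
      have h32 : 32 * l ≤ |z.2| := by
        by_contra hlt
        exact hzB ⟨hz.1, abs_lt.1 (not_le.1 hlt)⟩
      have : ‖φ z‖ ^ 2 ≤ 1 / (32 * l) * (|z.2| * ‖φ z‖ ^ 2) := by
        rw [← mul_assoc, one_div_mul_eq_div]
        refine le_mul_of_one_le_left (by positivity) ?_
        rwa [one_le_div (by positivity)]
      have h5 : 0 ≤ ‖φ z‖ ^ 4 := by positivity
      linarith
  have hs : IntegrableOn (fun z => 1 / (32 * l) * (|z.2| * ‖φ z‖ ^ 2)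
      + 1 / 8 * ‖φ z‖ ^ 4) (Strip R) := (hXi.const_mul _).add (h4.const_mul _)
  rw [integral_add hs hIi,
    integral_add (hXi.const_mul _) (h4.const_mul _), integral_const_mul, integral_const_mul,
    hII] at hmain
  set M := ∫ z in Strip R, ‖φ z‖ ^ 2
  set G := ∫ z in Strip R, magGradSq Avan φ z
  set X := ∫ z in Strip R, |z.2| * ‖φ z‖ ^ 2
  set N := ∫ z in Strip R, ‖φ z‖ ^ 4
  have hG' : 0 ≤ G := integral_nonneg hG0
  have hN' : 0 ≤ N := integral_nonneg fun z => by positivity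
  have hX : 1 / (32 * l) * X ≤ M / 2 := by
    rw [one_div_mul_eq_div, div_le_iff₀ (by positivity)]
    nlinarith [mul_nonneg hl.le hN']
  have hN : N ≤ 2 * M := by
    have : l * N ≤ l * (2 * M) := by nlinarith
    exact le_of_mul_le_mul_left this hl
  linarith

/-- `L²`-bound on the minimizers of `e_gs(L;R)`. -/
theorem strip_minimizer_L2_bound :
    ∃ C > (0:ℝ), ∀ L : ℝ, 0 < L → ∀ R : ℝ, 0 < R → ∀ φ : ℝ × ℝ → ℂ,
      MemH1mag0 R φ → Estrip L R φ = egs L R →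
      (∫ x in Strip R, ‖φ x‖ ^ 2) ≤ C * L ^ (-(2:ℝ)/3) * R := by
  refine ⟨512, by norm_num, fun L hL R hR φ hφ hmin => ?_⟩
  refine final_bound (Real.rpow_pos_of_pos hL _) hR φ hφ ?_
  have h0 : egs L R ≤ 0 := by
    refine Real.sInf_nonpos' ⟨Estrip L R 0, ⟨0, ?_, rfl⟩, ?_⟩
    · have hz : magGradSq Avan 0 = 0 := by
        funext x
        have : (0 : ℝ × ℝ → ℂ) = fun _ => 0 := rfl
        rw [this]
        simp [magGradSq]
      refine ⟨contDiff_const, ?_, ?_, ?_, fun _ _ => rfl⟩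
      · simp
      · rw [hz]; exact integrableOn_zero
      · simp
    · have : (0 : ℝ × ℝ → ℂ) = fun _ => 0 := rfl
      rw [this]
      simp [Estrip, stripDensity, magGradSq]
  rw [← hmin] at h0
  exact h0

end
end
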